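/- arXiv:2105.09037 — 3 statements merged into one kernel-verified Lean document; each statement's English description precedes it below -/
import Mathlib

section
/- For every behaviour P with M settings (for any M ≥ 1, with binary outcomes), the measure of locality equals the measure of free choice: μ_L(P) = μ_F(P). -/
open scoped BigOperators Classical
open Finset

noncomputable section

/-- The real value `±1` associated with a Boolean outcome. -/
def outVal (a : Bool) : ℝ := if a then 1 else -1

/-- A behaviour: nonnegative probabilities summing to one for every pair of settings. -/
def IsBehaviour {M N : ℕ} (P : Bool → Bool → Fin M → Fin N → ℝ) : Prop :=
  (∀ a b x y, 0 ≤ P a b x y) ∧ (∀ x y, ∑ a, ∑ b, P a b x y = 1)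

/-- A full-support probability distribution on pairs of settings. -/
def IsSettingDist {M : ℕ} (p : Fin M → Fin M → ℝ) : Prop :=
  (∀ x y, 0 < p x y) ∧ ∑ x, ∑ y, p x y = 1

/-- A hidden-variable model of the behaviour `P` with setting distribution `p`,
with finite hidden-variable space `Fin n`. -/
structure HVModel (M : ℕ) (P : Bool → Bool → Fin M → Fin M → ℝ)
    (p : Fin M → Fin M → ℝ) where
  n : ℕ
  q : Fin n → ℝ
  q_nonneg : ∀ l, 0 ≤ q l
  q_sum : ∑ l, q l = 1
  qc : Fin M → Fin M → Fin n → ℝ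
  qc_nonneg : ∀ x y l, 0 ≤ qc x y l
  qc_sum : ∀ x y, ∑ l, qc x y l = 1
  q_marg : ∀ l, q l = ∑ x, ∑ y, qc x y l * p x y
  Pc : Fin n → Bool → Bool → Fin M → Fin M → ℝ
  Pc_nonneg : ∀ l a b x y, 0 ≤ Pc l a b x y
  Pc_sum : ∀ l x y, ∑ a, ∑ b, Pc l a b x y = 1
  reproduce : ∀ a b x y, P a b x y = ∑ l, Pc l a b x y * qc x y l

namespace HVModel

variable {M : ℕ} {P : Bool → Bool → Fin M → Fin M → ℝ} {p : Fin M → Fin M → ℝ}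

/-- A hidden variable is local if the conditional outcome distribution factorises. -/
def IsLocalPoint (N : HVModel M P p) (l : Fin N.n) : Prop :=
  ∃ α β : Bool → Fin M → ℝ,
    (∀ a x, 0 ≤ α a x) ∧ (∀ x, ∑ a, α a x = 1) ∧
    (∀ b y, 0 ≤ β b y) ∧ (∀ y, ∑ b, β b y = 1) ∧
    (∀ a b x y, N.Pc l a b x y = α a x * β b y)

/-- A hidden variable is free if it is independent of the settings. -/
def IsFreePoint (N : HVModel M P p) (l : Fin N.n) : Prop :=
  ∀ x y, N.qc x y l = N.q l

/-- The total weight of the local hidden variables. -/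
def localWeight (N : HVModel M P p) : ℝ :=
  ∑ l, if N.IsLocalPoint l then N.q l else 0

/-- The total weight of the free hidden variables. -/
def freeWeight (N : HVModel M P p) : ℝ :=
  ∑ l, if N.IsFreePoint l then N.q l else 0

/-- An FHV model: every hidden variable is free. -/
def IsFHV (N : HVModel M P p) : Prop := ∀ l, N.IsFreePoint l

/-- An LHV model: every hidden variable is local. -/
def IsLHV (N : HVModel M P p) : Prop := ∀ l, N.IsLocalPoint l

end HVModel

/-- Local weights achievable by FHV models of `P` with setting distribution `p`. -/
def FHVLocalWeights (M : ℕ) (P : Bool → Bool → Fin M → Fin M → ℝ)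
    (p : Fin M → Fin M → ℝ) : Set ℝ :=
  {w | ∃ N : HVModel M P p, N.IsFHV ∧ w = N.localWeight}

/-- Free weights achievable by LHV models of `P` with setting distribution `p`. -/
def LHVFreeWeights (M : ℕ) (P : Bool → Bool → Fin M → Fin M → ℝ)
    (p : Fin M → Fin M → ℝ) : Set ℝ :=
  {w | ∃ N : HVModel M P p, N.IsLHV ∧ w = N.freeWeight}

/-- The measure of locality `μ_L`. -/
def muL (M : ℕ) (P : Bool → Bool → Fin M → Fin M → ℝ) : ℝ :=
  ⨅ sp : {f : Fin M → Fin M → ℝ // IsSettingDist f}, sSup (FHVLocalWeights M P sp.1)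

/-- The measure of free choice `μ_F`. -/
def muF (M : ℕ) (P : Bool → Bool → Fin M → Fin M → ℝ) : ℝ :=
  ⨅ sp : {f : Fin M → Fin M → ℝ // IsSettingDist f}, sSup (LHVFreeWeights M P sp.1)

/-! Already for each fixed setting distribution the two suprema agree, because a model of either
kind can be turned into one of the other kind with at least the same weight.

In an FHV model, split every nonlocal `λ` into four points `(λ, a, b)` which output `(a, b)`
deterministically, hence locally, and which have conditional weight `q(λ) P(a,b|x,y,λ)`: the
nonlocality becomes a dependence of the hidden variable on the settings. The local points stay free.

In an LHV model, the nonfree points have the same total weight under every `q(·|x,y)`, since the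
free ones do. So they can be merged into a single free point that responds with their average. The
free points stay local. -/

section FiniteSums

variable {ι κ : Type*} [Fintype ι] [Fintype κ]

lemma sum_ite_zero_eq_sum_subtype (s : ι → Prop) (q : ι → ℝ) :
    ∑ i, (if s i then q i else 0) = ∑ i : {i // s i}, q i := by
  rw [← sum_filter, ← sum_subtype_eq_sum_filter, subtype_univ]

lemma sum_comp_le_sum_ite {s : ι → Prop} {q : ι → ℝ} (hq : ∀ i, 0 ≤ q i) (f : κ ↪ ι)
    (hf : ∀ k, s (f k)) : ∑ k, q (f k) ≤ ∑ i, if s i then q i else 0 :=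
  calc ∑ k, q (f k) = ∑ i ∈ univ.map f, if s i then q i else 0 := by
        simp only [sum_map, hf, if_true]
    _ ≤ ∑ i, if s i then q i else 0 :=
        sum_le_univ_sum_of_nonneg fun i => ite_nonneg (hq i) le_rfl

lemma exists_mem_stdSimplex_sum_mul_eq [Nonempty ι] {s : ι → ℝ} (hs : ∀ i, 0 ≤ s i) :
    ∃ r ∈ stdSimplex ℝ ι, ∀ i, (∑ j, s j) * r i = s i := by
  rcases eq_or_ne (∑ j, s j) 0 with hsum | hsum
  · refine ⟨_, single_mem_stdSimplex ℝ (Classical.arbitrary ι), fun i => ?_⟩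
    rw [hsum, zero_mul, (sum_eq_zero_iff_of_nonneg fun j _ => hs j).1 hsum i (mem_univ i)]
  · exact ⟨fun i => s i / ∑ j, s j,
      ⟨fun i => div_nonneg (hs i) (sum_nonneg fun j _ => hs j), by rw [← sum_div, div_self hsum]⟩,
      fun i => mul_div_cancel₀ _ hsum⟩

end FiniteSums

section Responses

variable {M N : ℕ} {R : Bool → Bool → Fin M → Fin N → ℝ}

lemma exists_isBehaviour_mul_eq {W : ℝ} (hR : ∀ a b x y, 0 ≤ R a b x y)
    (hW : ∀ x y, ∑ a, ∑ b, R a b x y = W) :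
    ∃ R', IsBehaviour R' ∧ ∀ a b x y, W * R' a b x y = R a b x y := by
  choose r hr hrW using fun x y =>
    exists_mem_stdSimplex_sum_mul_eq fun k : Bool × Bool => hR k.1 k.2 x y
  refine ⟨fun a b x y => r x y (a, b), ⟨fun a b x y => (hr x y).1 _, fun x y => ?_⟩,
    fun a b x y => ?_⟩
  · rw [← Fintype.sum_prod_type, (hr x y).2]
  · rw [← hrW x y (a, b), Fintype.sum_prod_type, hW]

/-- A family of outcome distributions that is the product of one family for each party. A hidden
variable is local exactly when its response is factorizable, see `HVModel.IsLocalPoint`. -/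
def IsFactorizable (R : Bool → Bool → Fin M → Fin N → ℝ) : Prop :=
  ∃ (α : Bool → Fin M → ℝ) (β : Bool → Fin N → ℝ),
    (∀ a x, 0 ≤ α a x) ∧ (∀ x, ∑ a, α a x = 1) ∧
    (∀ b y, 0 ≤ β b y) ∧ (∀ y, ∑ b, β b y = 1) ∧
    (∀ a b x y, R a b x y = α a x * β b y)

lemma IsFactorizable.isBehaviour (hR : IsFactorizable R) : IsBehaviour R := by
  obtain ⟨α, β, hα₀, hα₁, hβ₀, hβ₁, hαβ⟩ := hR
  refine ⟨fun a b x y => ?_, fun x y => ?_⟩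
  · rw [hαβ]
    exact mul_nonneg (hα₀ a x) (hβ₀ b y)
  · simp only [hαβ, ← sum_mul_sum, hα₁, hβ₁, mul_one]

/-- The response that yields the outcomes `a` and `b` with certainty, whatever the settings. -/
def constResponse (a b : Bool) : Bool → Bool → Fin M → Fin N → ℝ :=
  fun a' b' _ _ => (if a' = a then 1 else 0) * (if b' = b then 1 else 0)

lemma isFactorizable_constResponse (a b : Bool) :
    IsFactorizable (constResponse a b : Bool → Bool → Fin M → Fin N → ℝ) :=
  ⟨fun a' _ => if a' = a then 1 else 0, fun b' _ => if b' = b then 1 else 0,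
    fun _ _ => ite_nonneg zero_le_one le_rfl, fun _ => Fintype.sum_ite_eq' a _,
    fun _ _ => ite_nonneg zero_le_one le_rfl, fun _ => Fintype.sum_ite_eq' b _,
    fun _ _ _ _ => rfl⟩

lemma sum_constResponse_mul (g : Bool → Bool → ℝ) (a b : Bool) (x : Fin M) (y : Fin N) :
    ∑ a', ∑ b', constResponse a' b' a b x y * g a' b' = g a b := by
  simp [constResponse]

end Responses

/-- A hidden-variable model of `P` over an arbitrary finite type `Λ`. It does not refer to a setting
distribution: `IndexedModel.toHVModel` turns it into an `HVModel` for any given one. -/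
structure IndexedModel {M : ℕ} (Λ : Type*) [Fintype Λ]
    (P : Bool → Bool → Fin M → Fin M → ℝ) where
  weight : Fin M → Fin M → Λ → ℝ
  weight_mem : ∀ x y, weight x y ∈ stdSimplex ℝ Λ
  response : Λ → Bool → Bool → Fin M → Fin M → ℝ
  isBehaviour_response : ∀ l, IsBehaviour (response l)
  reproduce : ∀ a b x y, P a b x y = ∑ l, response l a b x y * weight x y l

namespace HVModel

variable {M : ℕ} {P : Bool → Bool → Fin M → Fin M → ℝ} {p : Fin M → Fin M → ℝ}

section Weights

variable {κ : Type*} [Fintype κ] (N : HVModel M P p)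

lemma isLocalPoint_iff {l : Fin N.n} : N.IsLocalPoint l ↔ IsFactorizable (N.Pc l) := Iff.rfl

lemma localWeight_eq_sum_subtype : N.localWeight = ∑ l : {l // N.IsLocalPoint l}, N.q l :=
  sum_ite_zero_eq_sum_subtype _ _

lemma freeWeight_eq_sum_subtype : N.freeWeight = ∑ l : {l // N.IsFreePoint l}, N.q l :=
  sum_ite_zero_eq_sum_subtype _ _

lemma sum_le_localWeight (f : κ ↪ Fin N.n) (hf : ∀ k, N.IsLocalPoint (f k)) :
    ∑ k, N.q (f k) ≤ N.localWeight :=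
  sum_comp_le_sum_ite N.q_nonneg f hf

lemma sum_le_freeWeight (f : κ ↪ Fin N.n) (hf : ∀ k, N.IsFreePoint (f k)) :
    ∑ k, N.q (f k) ≤ N.freeWeight :=
  sum_comp_le_sum_ite N.q_nonneg f hf

end Weights

/-- The model in which every nonlocal point of the FHV model `N` is split into four points, one for
each pair of outcomes, which produce these outcomes with certainty. -/
def splitNonlocal (N : HVModel M P p) (hN : N.IsFHV) :
    IndexedModel ({l // N.IsLocalPoint l} ⊕ {l // ¬ N.IsLocalPoint l} × Bool × Bool) P where
  weight x y := Sum.elim (fun l => N.q l) fun k => N.q k.1 * N.Pc k.1 k.2.1 k.2.2 x y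
  weight_mem x y := by
    refine ⟨?_, ?_⟩
    · rintro (l | ⟨l, a, b⟩)
      · exact N.q_nonneg l
      · exact mul_nonneg (N.q_nonneg l) (N.Pc_nonneg l a b x y)
    · simp only [Fintype.sum_sum_type, Sum.elim_inl, Sum.elim_inr, Fintype.sum_prod_type,
        ← mul_sum, N.Pc_sum, mul_one]
      rw [Fintype.sum_subtype_add_sum_subtype N.IsLocalPoint N.q, N.q_sum]
  response := Sum.elim (fun l => N.Pc l) fun k => constResponse k.2.1 k.2.2
  isBehaviour_response := by
    rintro (l | ⟨-, a, b⟩)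
    · exact ⟨N.Pc_nonneg l, N.Pc_sum l⟩
    · exact (isFactorizable_constResponse a b).isBehaviour
  reproduce a b x y := by
    have hsplit (l : Fin N.n) : ∑ a', ∑ b', constResponse a' b' a b x y *
        (N.q l * N.Pc l a' b' x y) = N.Pc l a b x y * N.q l := by
      rw [sum_constResponse_mul fun a' b' => N.q l * N.Pc l a' b' x y, mul_comm]
    simp only [Fintype.sum_sum_type, Sum.elim_inl, Sum.elim_inr, Fintype.sum_prod_type, hsplit]
    rw [Fintype.sum_subtype_add_sum_subtype N.IsLocalPoint fun l => N.Pc l a b x y * N.q l,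
      N.reproduce]
    simp only [hN _ x y]

section NonfreePoints

variable (N : HVModel M P p)

/-- The total weight of the hidden variables that are not free. -/
def nonfreeWeight : ℝ := ∑ l : {l // ¬ N.IsFreePoint l}, N.q l

lemma nonfreeWeight_nonneg : 0 ≤ N.nonfreeWeight := sum_nonneg fun l _ => N.q_nonneg l

lemma freeWeight_add_nonfreeWeight : N.freeWeight + N.nonfreeWeight = 1 := by
  rw [freeWeight_eq_sum_subtype, nonfreeWeight, Fintype.sum_subtype_add_sum_subtype, N.q_sum]

lemma sum_nonfree_qc (x y : Fin M) :
    ∑ l : {l // ¬ N.IsFreePoint l}, N.qc x y l = N.nonfreeWeight := by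
  have hfree : ∑ l : {l // N.IsFreePoint l}, N.qc x y l = N.freeWeight := by
    rw [freeWeight_eq_sum_subtype]
    exact sum_congr rfl fun l _ => l.2 x y
  linarith [Fintype.sum_subtype_add_sum_subtype N.IsFreePoint (N.qc x y), N.qc_sum x y,
    N.freeWeight_add_nonfreeWeight]

lemma exists_nonfree_average :
    ∃ R, IsBehaviour R ∧ ∀ a b x y, N.nonfreeWeight * R a b x y =
      ∑ l : {l // ¬ N.IsFreePoint l}, N.Pc l a b x y * N.qc x y l := by
  refine exists_isBehaviour_mul_eq
    (fun a b x y => sum_nonneg fun l _ => mul_nonneg (N.Pc_nonneg l a b x y) (N.qc_nonneg x y l))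
    fun x y => ?_
  calc ∑ a, ∑ b, ∑ l : {l // ¬ N.IsFreePoint l}, N.Pc l a b x y * N.qc x y l
      = ∑ l : {l // ¬ N.IsFreePoint l}, (∑ a, ∑ b, N.Pc l a b x y) * N.qc x y l := by
        simp only [Fintype.sum_bool, add_mul, sum_add_distrib]
    _ = N.nonfreeWeight := by simp only [N.Pc_sum, one_mul, N.sum_nonfree_qc]

/-- The model in which all nonfree points of `N` are merged into a single one with response `R`. -/
def mergeNonfree {R : Bool → Bool → Fin M → Fin M → ℝ} (hR : IsBehaviour R)
    (hRN : ∀ a b x y, N.nonfreeWeight * R a b x y =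
      ∑ l : {l // ¬ N.IsFreePoint l}, N.Pc l a b x y * N.qc x y l) :
    IndexedModel ({l // N.IsFreePoint l} ⊕ Unit) P where
  weight _ _ := Sum.elim (fun l => N.q l) fun _ => N.nonfreeWeight
  weight_mem _ _ := by
    refine ⟨?_, ?_⟩
    · rintro (l | -)
      · exact N.q_nonneg l
      · exact N.nonfreeWeight_nonneg
    · simp only [Fintype.sum_sum_type, Sum.elim_inl, Sum.elim_inr, Fintype.sum_unique,
        ← freeWeight_eq_sum_subtype, freeWeight_add_nonfreeWeight]
  response := Sum.elim (fun l => N.Pc l) fun _ => R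
  isBehaviour_response := by
    rintro (l | -)
    · exact ⟨N.Pc_nonneg l, N.Pc_sum l⟩
    · exact hR
  reproduce a b x y := by
    have hfree : ∑ l : {l // N.IsFreePoint l}, N.Pc l a b x y * N.q l =
        ∑ l : {l // N.IsFreePoint l}, N.Pc l a b x y * N.qc x y l :=
      sum_congr rfl fun l _ => by rw [l.2 x y]
    simp only [Fintype.sum_sum_type, Sum.elim_inl, Sum.elim_inr, Fintype.sum_unique]
    rw [mul_comm, hRN, hfree, N.reproduce,
      Fintype.sum_subtype_add_sum_subtype N.IsFreePoint fun l => N.Pc l a b x y * N.qc x y l]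

end NonfreePoints

end HVModel

namespace IndexedModel

variable {M : ℕ} {P : Bool → Bool → Fin M → Fin M → ℝ} {p : Fin M → Fin M → ℝ}
  (hp₀ : ∀ x y, 0 ≤ p x y) (hp₁ : ∑ x, ∑ y, p x y = 1)
  {Λ κ : Type*} [Fintype Λ] [Fintype κ] (m : IndexedModel Λ P)

/-- The `HVModel` with setting distribution `p` obtained from an indexed model by enumerating its
hidden variables; `q` is forced to be the marginal. -/
def toHVModel : HVModel M P p where
  n := Fintype.card Λ
  q k := ∑ x, ∑ y, m.weight x y ((Fintype.equivFin Λ).symm k) * p x y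
  q_nonneg _ := sum_nonneg fun x _ => sum_nonneg fun y _ =>
    mul_nonneg ((m.weight_mem x y).1 _) (hp₀ x y)
  q_sum :=
    calc ∑ k, ∑ x, ∑ y, m.weight x y ((Fintype.equivFin Λ).symm k) * p x y
        = ∑ l, ∑ x, ∑ y, m.weight x y l * p x y :=
          (Fintype.equivFin Λ).symm.sum_comp fun l => ∑ x, ∑ y, m.weight x y l * p x y
      _ = ∑ x, ∑ y, (∑ l, m.weight x y l) * p x y := by
          simp only [sum_mul, sum_comm (s := univ (α := Λ))]
      _ = 1 := by simp only [(m.weight_mem _ _).2, one_mul, hp₁]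
  qc x y k := m.weight x y ((Fintype.equivFin Λ).symm k)
  qc_nonneg x y _ := (m.weight_mem x y).1 _
  qc_sum x y := ((Fintype.equivFin Λ).symm.sum_comp (m.weight x y)).trans (m.weight_mem x y).2
  q_marg _ := rfl
  Pc k := m.response ((Fintype.equivFin Λ).symm k)
  Pc_nonneg _ := (m.isBehaviour_response _).1
  Pc_sum _ := (m.isBehaviour_response _).2
  reproduce a b x y := (m.reproduce a b x y).trans
    ((Fintype.equivFin Λ).symm.sum_comp fun l => m.response l a b x y * m.weight x y l).symm

/-- The enumeration of the hidden variables that underlies `toHVModel`. -/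
def enum : Λ ≃ Fin (m.toHVModel hp₀ hp₁).n := Fintype.equivFin Λ

lemma toHVModel_qc (x y : Fin M) (l : Λ) :
    (m.toHVModel hp₀ hp₁).qc x y (m.enum hp₀ hp₁ l) = m.weight x y l :=
  congrArg (m.weight x y) ((Fintype.equivFin Λ).symm_apply_apply l)

lemma toHVModel_Pc (l : Λ) :
    (m.toHVModel hp₀ hp₁).Pc (m.enum hp₀ hp₁ l) = m.response l :=
  congrArg m.response ((Fintype.equivFin Λ).symm_apply_apply l)

variable {m}

lemma toHVModel_q_of_weight_eq {l : Λ} {c : ℝ} (hc : ∀ x y, m.weight x y l = c) :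
    (m.toHVModel hp₀ hp₁).q (m.enum hp₀ hp₁ l) = c := by
  rw [HVModel.q_marg]
  simp only [toHVModel_qc, hc, ← mul_sum, hp₁, mul_one]

lemma isFreePoint_toHVModel {l : Λ} {c : ℝ} (hc : ∀ x y, m.weight x y l = c) :
    (m.toHVModel hp₀ hp₁).IsFreePoint (m.enum hp₀ hp₁ l) := fun x y => by
  rw [toHVModel_qc, hc, toHVModel_q_of_weight_eq hp₀ hp₁ hc]

lemma isLocalPoint_toHVModel {l : Λ} (hl : IsFactorizable (m.response l)) :
    (m.toHVModel hp₀ hp₁).IsLocalPoint (m.enum hp₀ hp₁ l) := by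
  rwa [HVModel.isLocalPoint_iff, toHVModel_Pc]

lemma isFHV_toHVModel {c : Λ → ℝ} (hc : ∀ x y l, m.weight x y l = c l) :
    (m.toHVModel hp₀ hp₁).IsFHV :=
  (m.enum hp₀ hp₁).surjective.forall.2 fun l =>
    isFreePoint_toHVModel hp₀ hp₁ fun x y => hc x y l

lemma isLHV_toHVModel (hm : ∀ l, IsFactorizable (m.response l)) :
    (m.toHVModel hp₀ hp₁).IsLHV :=
  (m.enum hp₀ hp₁).surjective.forall.2 fun l => isLocalPoint_toHVModel hp₀ hp₁ (hm l)

lemma sum_le_freeWeight_toHVModel (f : κ ↪ Λ) {c : κ → ℝ}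
    (hc : ∀ k x y, m.weight x y (f k) = c k) :
    ∑ k, c k ≤ (m.toHVModel hp₀ hp₁).freeWeight :=
  calc ∑ k, c k = ∑ k, (m.toHVModel hp₀ hp₁).q (m.enum hp₀ hp₁ (f k)) :=
        sum_congr rfl fun k _ => (toHVModel_q_of_weight_eq hp₀ hp₁ (hc k)).symm
    _ ≤ (m.toHVModel hp₀ hp₁).freeWeight :=
        (m.toHVModel hp₀ hp₁).sum_le_freeWeight (f.trans (m.enum hp₀ hp₁).toEmbedding)
          fun k => isFreePoint_toHVModel hp₀ hp₁ (hc k)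

lemma sum_le_localWeight_toHVModel (f : κ ↪ Λ) {c : κ → ℝ}
    (hf : ∀ k, IsFactorizable (m.response (f k))) (hc : ∀ k x y, m.weight x y (f k) = c k) :
    ∑ k, c k ≤ (m.toHVModel hp₀ hp₁).localWeight :=
  calc ∑ k, c k = ∑ k, (m.toHVModel hp₀ hp₁).q (m.enum hp₀ hp₁ (f k)) :=
        sum_congr rfl fun k _ => (toHVModel_q_of_weight_eq hp₀ hp₁ (hc k)).symm
    _ ≤ (m.toHVModel hp₀ hp₁).localWeight :=
        (m.toHVModel hp₀ hp₁).sum_le_localWeight (f.trans (m.enum hp₀ hp₁).toEmbedding)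
          fun k => isLocalPoint_toHVModel hp₀ hp₁ (hf k)

end IndexedModel

section FixedSettingDistribution

variable {M : ℕ} {P : Bool → Bool → Fin M → Fin M → ℝ} {p : Fin M → Fin M → ℝ}

lemma HVModel.IsFHV.exists_isLHV_localWeight_le_freeWeight {N : HVModel M P p}
    (hN : N.IsFHV) (hp₀ : ∀ x y, 0 ≤ p x y) (hp₁ : ∑ x, ∑ y, p x y = 1) :
    ∃ N' : HVModel M P p, N'.IsLHV ∧ N.localWeight ≤ N'.freeWeight := by
  refine ⟨(N.splitNonlocal hN).toHVModel hp₀ hp₁, IndexedModel.isLHV_toHVModel hp₀ hp₁ ?_, ?_⟩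
  · rintro (l | ⟨-, a, b⟩)
    · exact l.2
    · exact isFactorizable_constResponse a b
  · rw [N.localWeight_eq_sum_subtype]
    exact IndexedModel.sum_le_freeWeight_toHVModel hp₀ hp₁ .inl fun _ _ _ => rfl

lemma HVModel.IsLHV.exists_isFHV_freeWeight_le_localWeight {N : HVModel M P p}
    (hN : N.IsLHV) (hp₀ : ∀ x y, 0 ≤ p x y) (hp₁ : ∑ x, ∑ y, p x y = 1) :
    ∃ N' : HVModel M P p, N'.IsFHV ∧ N.freeWeight ≤ N'.localWeight := by
  obtain ⟨R, hR, hRN⟩ := N.exists_nonfree_average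
  refine ⟨(N.mergeNonfree hR hRN).toHVModel hp₀ hp₁,
    IndexedModel.isFHV_toHVModel hp₀ hp₁ fun _ _ _ => rfl, ?_⟩
  rw [N.freeWeight_eq_sum_subtype]
  exact IndexedModel.sum_le_localWeight_toHVModel hp₀ hp₁ .inl (fun l => hN l) fun _ _ _ => rfl

theorem sSup_FHVLocalWeights_eq_sSup_LHVFreeWeights
    (hp₀ : ∀ x y, 0 ≤ p x y) (hp₁ : ∑ x, ∑ y, p x y = 1) :
    sSup (FHVLocalWeights M P p) = sSup (LHVFreeWeights M P p) := by
  refine csSup_eq_csSup_of_forall_exists_le ?_ ?_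
  · rintro _ ⟨N, hN, rfl⟩
    obtain ⟨N', hN', hle⟩ := hN.exists_isLHV_localWeight_le_freeWeight hp₀ hp₁
    exact ⟨_, ⟨N', hN', rfl⟩, hle⟩
  · rintro _ ⟨N, hN, rfl⟩
    obtain ⟨N', hN', hle⟩ := hN.exists_isFHV_freeWeight_le_localWeight hp₀ hp₁
    exact ⟨_, ⟨N', hN', rfl⟩, hle⟩

end FixedSettingDistribution

theorem measure_locality_eq_measure_free_choice
    (M : ℕ) (hM : 1 ≤ M) (P : Bool → Bool → Fin M → Fin M → ℝ)
    (hP : IsBehaviour P) :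
    muL M P = muF M P :=
  iInf_congr fun p => sSup_FHVLocalWeights_eq_sSup_LHVFreeWeights
    (fun x y => (p.2.1 x y).le) p.2.2
end
end

section
/- For every non-signalling behaviour P with two settings x,y ∈ {0,1}, the measure of locality satisfies μ_L(P) = (4 − S_max)/2 if S_max > 2, and μ_L(P) = 1 if S_max ≤ 2, where S_max is the maximal absolute value of the four CHSH expressions of P. -/
/-!
A sign pattern with product `-1` defines an XOR game, and for a behaviour of CHSH value `S` the
losing probabilities of the four settings add up to `(4 - S) / 2`. This total loss is linear, at
least `1` on product behaviours and nonnegative on all others, so in an FHV model it bounds the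
local weight.

If the loss is at most `1`, the bound is attained. Each losing event occurs under exactly one
deterministic strategy that loses at no other setting. Mixing these strategies with the
probabilities of their events, and a PR box with the remaining weight, yields a non-signalling
behaviour with the losing probabilities of `P`; these determine a non-signalling behaviour.

If no CHSH value exceeds `2`, then by Fine's theorem `P` is a mixture of products. The CHSH
inequalities say that the correlations of Bob's two outcomes which are admissible for each setting
of Alice overlap, so that her two settings admit joint distributions with the same distribution of
Bob's pair of outcomes. That pair serves as hidden variable.

Both values are independent of the setting distribution, so the infimum in `muL` is over a constant.
-/

open scoped BigOperators Classical
open Finset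

noncomputable section

/-- The correlator `⟨ab⟩_{xy}`. -/
def corr {M N : ℕ} (P : Bool → Bool → Fin M → Fin N → ℝ) (x : Fin M) (y : Fin N) : ℝ :=
  ∑ a, ∑ b, outVal a * outVal b * P a b x y

/-- Non-signalling for a two-setting behaviour. -/
def NonSignalling (P : Bool → Bool → Fin 2 → Fin 2 → ℝ) : Prop :=
  (∀ a x y y', ∑ b, P a b x y = ∑ b, P a b x y') ∧
  (∀ b y x x', ∑ a, P a b x y = ∑ a, P a b x' y)

def S1 (P : Bool → Bool → Fin 2 → Fin 2 → ℝ) : ℝ :=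
  corr P 0 0 + corr P 0 1 + corr P 1 0 - corr P 1 1

def S2 (P : Bool → Bool → Fin 2 → Fin 2 → ℝ) : ℝ :=
  corr P 0 0 + corr P 0 1 - corr P 1 0 + corr P 1 1

def S3 (P : Bool → Bool → Fin 2 → Fin 2 → ℝ) : ℝ :=
  corr P 0 0 - corr P 0 1 + corr P 1 0 + corr P 1 1

def S4 (P : Bool → Bool → Fin 2 → Fin 2 → ℝ) : ℝ :=
  -corr P 0 0 + corr P 0 1 + corr P 1 0 + corr P 1 1

/-- Maximal absolute value of the four CHSH expressions. -/
def Smax (P : Bool → Bool → Fin 2 → Fin 2 → ℝ) : ℝ :=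
  max (max |S1 P| |S2 P|) (max |S3 P| |S4 P|)

section Signs

lemma outVal_true : outVal true = 1 := if_pos rfl

lemma outVal_false : outVal false = -1 := if_neg Bool.false_ne_true

lemma outVal_not (a : Bool) : outVal (!a) = -outVal a := by
  cases a <;> norm_num [outVal]

lemma outVal_xor (a b : Bool) : outVal (a ^^ b) = -(outVal a * outVal b) := by
  cases a <;> cases b <;> norm_num [outVal]

end Signs

section Product

variable {M N : ℕ}

/-- A product behaviour: each party answers by a response function of its own setting. The setting
is the first argument of a response function, so that `α x` is a distribution. -/
def IsProduct (Q : Bool → Bool → Fin M → Fin N → ℝ) : Prop :=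
  ∃ (α : Fin M → Bool → ℝ) (β : Fin N → Bool → ℝ),
    (∀ x, α x ∈ stdSimplex ℝ Bool) ∧ (∀ y, β y ∈ stdSimplex ℝ Bool) ∧
    ∀ a b x y, Q a b x y = α x a * β y b

/-- The product behaviour in which the parties answer `f x` and `g y` with certainty. -/
def deterministic (f : Fin M → Bool) (g : Fin N → Bool) (a b : Bool) (x : Fin M) (y : Fin N) : ℝ :=
  (Pi.single (f x) 1 : Bool → ℝ) a * (Pi.single (g y) 1 : Bool → ℝ) b

lemma isProduct_deterministic (f : Fin M → Bool) (g : Fin N → Bool) :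
    IsProduct (deterministic f g) :=
  ⟨fun x => Pi.single (f x) 1, fun y => Pi.single (g y) 1, fun _ => single_mem_stdSimplex ℝ _,
    fun _ => single_mem_stdSimplex ℝ _, fun _ _ _ _ => rfl⟩

lemma IsProduct.isBehaviour {Q : Bool → Bool → Fin M → Fin N → ℝ} (hQ : IsProduct Q) :
    IsBehaviour Q := by
  obtain ⟨α, β, hα, hβ, hαβ⟩ := hQ
  refine ⟨fun a b x y => ?_, fun x y => ?_⟩
  · rw [hαβ]
    exact mul_nonneg ((hα x).1 a) ((hβ y).1 b)
  · simp only [hαβ, ← Finset.mul_sum, (hβ y).2, mul_one, (hα x).2]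

lemma IsProduct.nonSignalling {Q : Bool → Bool → Fin 2 → Fin 2 → ℝ} (hQ : IsProduct Q) :
    NonSignalling Q := by
  obtain ⟨α, β, hα, hβ, hαβ⟩ := hQ
  refine ⟨fun a x y y' => ?_, fun b y x x' => ?_⟩
  · simp only [hαβ, ← Finset.mul_sum, (hβ _).2]
  · simp only [hαβ, ← Finset.sum_mul, (hα _).2]

end Product

section Models

variable {M : ℕ} {P : Bool → Bool → Fin M → Fin M → ℝ} {p : Fin M → Fin M → ℝ}

lemma HVModel.isLocalPoint_iff_isProduct (N : HVModel M P p) (l : Fin N.n) :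
    N.IsLocalPoint l ↔ IsProduct (N.Pc l) := by
  constructor
  · rintro ⟨α, β, hα, hα', hβ, hβ', hαβ⟩
    exact ⟨fun x a => α a x, fun y b => β b y, fun x => ⟨(hα · x), hα' x⟩,
      fun y => ⟨(hβ · y), hβ' y⟩, hαβ⟩
  · rintro ⟨α, β, hα, hβ, hαβ⟩
    exact ⟨fun a x => α x a, fun b y => β y b, fun a x => (hα x).1 a, fun x => (hα x).2,
      fun b y => (hβ y).1 b, fun y => (hβ y).2, hαβ⟩

lemma HVModel.localWeight_le_one (N : HVModel M P p) : N.localWeight ≤ 1 := by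
  rw [← N.q_sum]
  refine Finset.sum_le_sum fun l _ => ?_
  split_ifs
  exacts [le_rfl, N.q_nonneg l]

lemma HVModel.IsFHV.eq_sum_smul {N : HVModel M P p} (hN : N.IsFHV) :
    P = ∑ l, N.q l • N.Pc l := by
  funext a b x y
  simp only [N.reproduce a b x y, hN _ x y, Finset.sum_apply, Pi.smul_apply, smul_eq_mul, mul_comm]

lemma sum_isProduct_mem_FHVLocalWeights {ι : Type*} [Fintype ι] {q : ι → ℝ}
    {Q : ι → Bool → Bool → Fin M → Fin M → ℝ} (hq : q ∈ stdSimplex ℝ ι)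
    (hQ : ∀ i, IsBehaviour (Q i)) (hP : P = ∑ i, q i • Q i) (hp : IsSettingDist p) :
    ∑ i, (if IsProduct (Q i) then q i else 0) ∈ FHVLocalWeights M P p := by
  let e := (Fintype.equivFin ι).symm
  have hsum : ∑ l, q (e l) = 1 := (e.sum_comp q).trans hq.2
  let N : HVModel M P p :=
    { n := Fintype.card ι
      q := fun l => q (e l)
      q_nonneg := fun l => hq.1 (e l)
      q_sum := hsum
      qc := fun _ _ l => q (e l)
      qc_nonneg := fun _ _ l => hq.1 (e l)
      qc_sum := fun _ _ => hsum
      q_marg := fun l => by simp only [← Finset.mul_sum, hp.2, mul_one]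
      Pc := fun l => Q (e l)
      Pc_nonneg := fun l => (hQ (e l)).1
      Pc_sum := fun l => (hQ (e l)).2
      reproduce := fun a b x y => by
        rw [e.sum_comp fun i => Q i a b x y * q i, hP]
        simp only [Finset.sum_apply, Pi.smul_apply, smul_eq_mul, mul_comm] }
  refine ⟨N, fun _ _ _ => rfl, ?_⟩
  simp only [HVModel.localWeight, N.isLocalPoint_iff_isProduct]
  exact (e.sum_comp fun i => if IsProduct (Q i) then q i else 0).symm

lemma exists_isSettingDist (M : ℕ) [NeZero M] : ∃ p : Fin M → Fin M → ℝ, IsSettingDist p := by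
  have hM : (0 : ℝ) < M := Nat.cast_pos.2 (NeZero.pos M)
  refine ⟨fun _ _ => (M * M : ℝ)⁻¹, fun _ _ => by positivity, ?_⟩
  simp only [Finset.sum_const, Finset.card_univ, Fintype.card_fin, nsmul_eq_mul]
  field_simp

lemma muL_eq_of_isGreatest [NeZero M] {w : ℝ}
    (h : ∀ p, IsSettingDist p → IsGreatest (FHVLocalWeights M P p) w) : muL M P = w := by
  have : Nonempty {p : Fin M → Fin M → ℝ // IsSettingDist p} :=
    nonempty_subtype.2 (exists_isSettingDist M)
  simp only [muL, (h _ (Subtype.prop _)).csSup_eq, ciInf_const]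

end Models

section Loss

variable {M N : ℕ}

/-- The total probability, summed over all settings, of losing the XOR game with sign pattern `s`:
at settings `x, y` the parties win when the product of their outcomes has sign `s x y`, with `true`
standing for `+1`, so that the losing outcomes are `a` and `a ^^ s x y`. -/
def loss (s : Fin M → Fin N → Bool) (P : Bool → Bool → Fin M → Fin N → ℝ) : ℝ :=
  ∑ x, ∑ y, ∑ a, P a (a ^^ s x y) x y

lemma loss_nonneg (s : Fin M → Fin N → Bool) {P : Bool → Bool → Fin M → Fin N → ℝ}
    (hP : IsBehaviour P) : 0 ≤ loss s P :=
  Finset.sum_nonneg fun _ _ => Finset.sum_nonneg fun _ _ => Finset.sum_nonneg fun _ _ =>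
    hP.1 _ _ _ _

lemma loss_sum_smul {ι : Type*} [Fintype ι] (s : Fin M → Fin N → Bool) (q : ι → ℝ)
    (Q : ι → Bool → Bool → Fin M → Fin N → ℝ) :
    loss s (∑ i, q i • Q i) = ∑ i, q i * loss s (Q i) := by
  simp only [loss, Finset.sum_apply, Pi.smul_apply, smul_eq_mul, Finset.mul_sum,
    Finset.sum_comm (γ := ι)]

lemma loss_eq_sum_corr (s : Fin M → Fin N → Bool) {P : Bool → Bool → Fin M → Fin N → ℝ}
    (hP : IsBehaviour P) : loss s P = ∑ x, ∑ y, (1 - outVal (s x y) * corr P x y) / 2 := by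
  refine Finset.sum_congr rfl fun x _ => Finset.sum_congr rfl fun y _ => ?_
  have hsum := hP.2 x y
  simp only [Fintype.sum_bool] at hsum
  cases h : s x y <;>
    simp only [corr, Fintype.sum_bool, Bool.xor_true, Bool.xor_false, Bool.not_true, Bool.not_false,
      outVal_true, outVal_false] <;>
    linarith

lemma HVModel.IsFHV.localWeight_le_loss {P : Bool → Bool → Fin M → Fin M → ℝ}
    {p : Fin M → Fin M → ℝ} {s : Fin M → Fin M → Bool}
    (hs : ∀ Q : Bool → Bool → Fin M → Fin M → ℝ, IsProduct Q → 1 ≤ loss s Q)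
    {N : HVModel M P p} (hN : N.IsFHV) : N.localWeight ≤ loss s P := by
  conv_rhs => rw [hN.eq_sum_smul, loss_sum_smul]
  refine Finset.sum_le_sum fun l _ => ?_
  split_ifs with hl
  · exact le_mul_of_one_le_right (N.q_nonneg l) (hs _ ((N.isLocalPoint_iff_isProduct l).1 hl))
  · exact mul_nonneg (N.q_nonneg l) (loss_nonneg s ⟨N.Pc_nonneg l, N.Pc_sum l⟩)

/-- The Popescu–Rohrlich box of a sign pattern: at all settings it produces the two winning outcome
pairs with probability `1 / 2` each. -/
def prBox (s : Fin M → Fin N → Bool) (a b : Bool) (x : Fin M) (y : Fin N) : ℝ :=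
  if (a ^^ b) = s x y then 0 else 1 / 2

lemma prBox_losing (s : Fin M → Fin N → Bool) (a : Bool) (x : Fin M) (y : Fin N) :
    prBox s a (a ^^ s x y) x y = 0 := by
  simp [prBox]

lemma loss_prBox (s : Fin M → Fin N → Bool) : loss s (prBox s) = 0 := by
  simp only [loss, prBox_losing, Finset.sum_const_zero]

lemma isBehaviour_prBox (s : Fin M → Fin N → Bool) : IsBehaviour (prBox s) := by
  refine ⟨fun a b x y => by unfold prBox; split_ifs <;> norm_num, fun x y => ?_⟩
  cases h : s x y <;> norm_num [prBox, h]

lemma nonSignalling_prBox (s : Fin 2 → Fin 2 → Bool) : NonSignalling (prBox s) := by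
  constructor
  · intro a x y y'
    cases a <;> cases h : s x y <;> cases h' : s x y' <;> simp [prBox, h, h']
  · intro b y x x'
    cases b <;> cases h : s x y <;> cases h' : s x' y <;> simp [prBox, h, h']

end Loss

section Polytope

/-- The polytope of non-signalling behaviours with two settings. -/
def nonSignallingPolytope : Set (Bool → Bool → Fin 2 → Fin 2 → ℝ) :=
  {P | IsBehaviour P ∧ NonSignalling P}

lemma convex_nonSignallingPolytope : Convex ℝ nonSignallingPolytope := by
  rintro P ⟨⟨hP, hP'⟩, hPA, hPB⟩ Q ⟨⟨hQ, hQ'⟩, hQA, hQB⟩ t u ht hu htu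
  refine ⟨⟨fun a b x y => ?_, fun x y => ?_⟩, fun a x y y' => ?_, fun b y x x' => ?_⟩ <;>
    simp only [Pi.add_apply, Pi.smul_apply, smul_eq_mul, Finset.sum_add_distrib, ← Finset.mul_sum]
  · exact add_nonneg (mul_nonneg ht (hP a b x y)) (mul_nonneg hu (hQ a b x y))
  · rw [hP', hQ', mul_one, mul_one, htu]
  · rw [hPA a x y y', hQA a x y y']
  · rw [hPB b y x x', hQB b y x x']

lemma exists_eq_expectations {P : Bool → Bool → Fin 2 → Fin 2 → ℝ}
    (hP : P ∈ nonSignallingPolytope) :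
    ∃ A B : Fin 2 → ℝ, ∀ a b x y, P a b x y =
      (1 + outVal a * A x + outVal b * B y + outVal a * outVal b * corr P x y) / 4 := by
  obtain ⟨⟨-, hsum⟩, hA, hB⟩ := hP
  refine ⟨fun x => ∑ a, outVal a * ∑ b, P a b x 0, fun y => ∑ b, outVal b * ∑ a, P a b 0 y,
    fun a b x y => ?_⟩
  simp only [hA _ x 0 y, hB _ y 0 x]
  have hsum := hsum x y
  simp only [Fintype.sum_bool] at hsum
  cases a <;> cases b <;> simp only [corr, Fintype.sum_bool, outVal_true, outVal_false] <;> linarith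

end Polytope

section CHSH

/-- The CHSH sign patterns are those in which the product of the four signs is `-1`, with `true`
standing for `+1`. -/
def IsCHSHPattern (s : Fin 2 → Fin 2 → Bool) : Prop :=
  (s 0 0 ^^ s 0 1 ^^ s 1 0 ^^ s 1 1) = true

/-- The combination of the four correlators with the signs prescribed by `s`. -/
def chsh (s : Fin 2 → Fin 2 → Bool) (P : Bool → Bool → Fin 2 → Fin 2 → ℝ) : ℝ :=
  ∑ x, ∑ y, outVal (s x y) * corr P x y

variable {P Q : Bool → Bool → Fin 2 → Fin 2 → ℝ} {s : Fin 2 → Fin 2 → Bool}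

lemma IsCHSHPattern.apply_one_one (hs : IsCHSHPattern s) :
    s 1 1 = !(s 0 0 ^^ s 0 1 ^^ s 1 0) := by
  unfold IsCHSHPattern at hs
  cases h : s 1 1 <;> simpa [h] using hs

lemma isGreatest_Smax (P : Bool → Bool → Fin 2 → Fin 2 → ℝ) :
    IsGreatest {v | ∃ s, IsCHSHPattern s ∧ chsh s P = v} (Smax P) := by
  constructor
  · have habs : ∀ v s, IsCHSHPattern s → chsh s P = v →
        ∃ t, IsCHSHPattern t ∧ chsh t P = |v| := by
      rintro _ s hs rfl
      rcases abs_choice (chsh s P) with h | h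
      · exact ⟨s, hs, h.symm⟩
      · refine ⟨fun x y => !s x y, by simpa [IsCHSHPattern] using hs, h ▸ ?_⟩
        simp only [chsh, outVal_not, neg_mul, Finset.sum_neg_distrib]
    have h₁ := habs (S1 P) ![![true, true], ![true, false]] rfl
      (by simp [chsh, S1, outVal]; ring)
    have h₂ := habs (S2 P) ![![true, true], ![false, true]] rfl
      (by simp [chsh, S2, outVal]; ring)
    have h₃ := habs (S3 P) ![![true, false], ![true, true]] rfl
      (by simp [chsh, S3, outVal]; ring)
    have h₄ := habs (S4 P) ![![false, true], ![true, true]] rfl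
      (by simp [chsh, S4, outVal]; ring)
    exact max_rec' _ (max_rec' _ h₁ h₂) (max_rec' _ h₃ h₄)
  · rintro _ ⟨s, hs, rfl⟩
    have h₁ : |S1 P| ≤ Smax P := (le_max_left _ _).trans (le_max_left _ _)
    have h₂ : |S2 P| ≤ Smax P := (le_max_right _ _).trans (le_max_left _ _)
    have h₃ : |S3 P| ≤ Smax P := (le_max_left _ _).trans (le_max_right _ _)
    have h₄ : |S4 P| ≤ Smax P := (le_max_right _ _).trans (le_max_right _ _)
    simp only [abs_le, S1, S2, S3, S4] at h₁ h₂ h₃ h₄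
    simp only [chsh, Fin.sum_univ_two, hs.apply_one_one]
    cases s 0 0 <;> cases s 0 1 <;> cases s 1 0 <;>
      simp only [outVal_xor, outVal_not, outVal_true, outVal_false] <;>
      linarith

lemma loss_eq_chsh (s : Fin 2 → Fin 2 → Bool) (hP : IsBehaviour P) :
    loss s P = (4 - chsh s P) / 2 := by
  simp only [loss_eq_sum_corr s hP, chsh, Fin.sum_univ_two]
  ring

lemma sum_sign_mul_le_two (hs : IsCHSHPattern s) {u v : Fin 2 → ℝ} (hu : ∀ x, |u x| ≤ 1)
    (hv : ∀ y, |v y| ≤ 1) : ∑ x, ∑ y, outVal (s x y) * (u x * v y) ≤ 2 := by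
  have hrow : ∀ x, ∑ y, outVal (s x y) * (u x * v y) ≤ |∑ y, outVal (s x y) * v y| := by
    intro x
    calc ∑ y, outVal (s x y) * (u x * v y)
        = u x * ∑ y, outVal (s x y) * v y := by
          simp only [Finset.mul_sum, mul_left_comm]
      _ ≤ |u x| * |∑ y, outVal (s x y) * v y| := (le_abs_self _).trans (abs_mul _ _).le
      _ ≤ |∑ y, outVal (s x y) * v y| := mul_le_of_le_one_left (abs_nonneg _) (hu x)
  -- One of the two rows is `±(v 0 + v 1)`, the other `±(v 0 - v 1)`.
  have hrows : |∑ y, outVal (s 0 y) * v y| + |∑ y, outVal (s 1 y) * v y| ≤ 2 := by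
    have h0 := abs_le.1 (hv 0)
    have h1 := abs_le.1 (hv 1)
    simp only [Fin.sum_univ_two, hs.apply_one_one]
    cases s 0 0 <;> cases s 0 1 <;> cases s 1 0 <;>
      simp only [outVal_xor, outVal_not, outVal_true, outVal_false] <;>
      grind
  rw [Fin.sum_univ_two]
  linarith [hrow 0, hrow 1]

lemma abs_sub_le_one_of_mem_stdSimplex {r : Bool → ℝ} (hr : r ∈ stdSimplex ℝ Bool) :
    |r true - r false| ≤ 1 := by
  have hsum := hr.2
  rw [Fintype.sum_bool] at hsum
  rw [abs_le]
  constructor <;> linarith [hr.1 true, hr.1 false]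

lemma IsProduct.one_le_loss (hQ : IsProduct Q) (hs : IsCHSHPattern s) : 1 ≤ loss s Q := by
  have hbeh := hQ.isBehaviour
  obtain ⟨α, β, hα, hβ, hαβ⟩ := hQ
  have hcorr : ∀ x y, corr Q x y = (α x true - α x false) * (β y true - β y false) := by
    intro x y
    simp only [corr, hαβ, Fintype.sum_bool, outVal_true, outVal_false]
    ring
  have hchsh : chsh s Q ≤ 2 := by
    simp only [chsh, hcorr]
    exact sum_sign_mul_le_two hs (fun x => abs_sub_le_one_of_mem_stdSimplex (hα x))
      fun y => abs_sub_le_one_of_mem_stdSimplex (hβ y)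
  rw [loss_eq_chsh s hbeh]
  linarith

end CHSH

section NonlocalCase

variable {P Q : Bool → Bool → Fin 2 → Fin 2 → ℝ} {s : Fin 2 → Fin 2 → Bool}

/-- The losing probabilities fix the correlators, and they fix `A x ∓ B y`, where the sign is
`s x y`. The product of these signs being `-1`, this fixes the expectations `A` and `B` as well. -/
lemma eq_of_losing_eq (hs : IsCHSHPattern s) (hP : P ∈ nonSignallingPolytope)
    (hQ : Q ∈ nonSignallingPolytope)
    (h : ∀ a x y, P a (a ^^ s x y) x y = Q a (a ^^ s x y) x y) : P = Q := by
  obtain ⟨A, B, hPAB⟩ := exists_eq_expectations hP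
  obtain ⟨A', B', hQAB⟩ := exists_eq_expectations hQ
  have hcorr : ∀ x y, corr P x y = corr Q x y := by
    intro x y
    have hf := h false x y
    have ht := h true x y
    rw [hPAB, hQAB] at hf ht
    cases hxy : s x y <;>
      simp only [hxy, outVal_xor, outVal_true, outVal_false] at hf ht <;>
      linarith
  have hAB : ∀ x y, A x - A' x = outVal (s x y) * (B y - B' y) := by
    intro x y
    have ht := h true x y
    rw [hPAB, hQAB, hcorr] at ht
    cases hxy : s x y <;>
      simp only [hxy, outVal_xor, outVal_true, outVal_false] at ht ⊢ <;>
      linarith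
  have hB : ∀ y, B y = B' y := by
    have h00 := hAB 0 0
    have h01 := hAB 0 1
    have h10 := hAB 1 0
    have h11 := hAB 1 1
    rw [hs.apply_one_one] at h11
    rw [Fin.forall_fin_two]
    cases h : s 0 0 <;> cases h' : s 0 1 <;> cases h'' : s 1 0 <;>
      simp only [h, h', h'', outVal_xor, outVal_not, outVal_true,
        outVal_false] at h00 h01 h10 h11 <;>
      constructor <;> linarith
  have hA : ∀ x, A x = A' x := fun x => by
    have := hAB x 0
    rwa [hB, sub_self, mul_zero, sub_eq_zero] at this
  funext a b x y
  rw [hPAB, hQAB, hA, hB, hcorr]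

lemma exists_deterministic_losing_once (hs : IsCHSHPattern s) (x₀ y₀ : Fin 2) (a₀ : Bool) :
    ∃ f g : Fin 2 → Bool, f x₀ = a₀ ∧ ∀ x y, (f x ^^ g y) = s x y ↔ x = x₀ ∧ y = y₀ := by
  refine ⟨fun x => if x = x₀ then a₀ else !(a₀ ^^ s x₀ y₀ ^^ s x y₀),
    fun y => if y = y₀ then a₀ ^^ s x₀ y₀ else !(a₀ ^^ s x₀ y), if_pos rfl, ?_⟩
  simp only [Fin.forall_fin_two]
  fin_cases x₀ <;> fin_cases y₀ <;> simp [hs.apply_one_one] <;>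
    cases a₀ <;> cases s 0 0 <;> cases s 0 1 <;> cases s 1 0 <;> simp

lemma exists_losing_deterministic (hs : IsCHSHPattern s) (e : Fin 2 × Fin 2 × Bool) :
    ∃ Q, IsProduct Q ∧ ∀ a x y, Q a (a ^^ s x y) x y = if e = (x, y, a) then 1 else 0 := by
  obtain ⟨x₀, y₀, a₀⟩ := e
  obtain ⟨f, g, hf, hfg⟩ := exists_deterministic_losing_once hs x₀ y₀ a₀
  refine ⟨deterministic f g, isProduct_deterministic f g, fun a x y => ?_⟩
  have hanswer : a = f x ∧ (a ^^ s x y) = g y ↔ (x₀, y₀, a₀) = (x, y, a) := by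
    rw [Prod.mk.injEq, Prod.mk.injEq]
    constructor
    · rintro ⟨rfl, hg⟩
      obtain ⟨rfl, rfl⟩ := (hfg x y).1 (by simp [← hg])
      exact ⟨rfl, rfl, hf.symm⟩
    · rintro ⟨rfl, rfl, rfl⟩
      refine ⟨hf.symm, ?_⟩
      rw [← (hfg _ _).2 ⟨rfl, rfl⟩, hf]
      simp
  simp only [deterministic, Pi.single_apply, ite_zero_mul_ite_zero, mul_one, hanswer]

lemma exists_prBox_decomposition (hP : P ∈ nonSignallingPolytope) (hs : IsCHSHPattern s)
    (hloss : loss s P ≤ 1) :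
    ∃ q ∈ stdSimplex ℝ (Option (Fin 2 × Fin 2 × Bool)),
      ∃ Q : Option (Fin 2 × Fin 2 × Bool) → Bool → Bool → Fin 2 → Fin 2 → ℝ,
        q none = 1 - loss s P ∧ Q none = prBox s ∧ (∀ e, IsProduct (Q (some e))) ∧
        P = ∑ o, q o • Q o := by
  choose D hD hlosing using exists_losing_deterministic hs
  let q : Option (Fin 2 × Fin 2 × Bool) → ℝ := fun o =>
    o.elim (1 - loss s P) fun e => P e.2.2 (e.2.2 ^^ s e.1 e.2.1) e.1 e.2.1
  let Q : Option (Fin 2 × Fin 2 × Bool) → Bool → Bool → Fin 2 → Fin 2 → ℝ :=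
    fun o => o.elim (prBox s) D
  have hq : q ∈ stdSimplex ℝ _ := by
    refine ⟨?_, ?_⟩
    · rintro (_ | e)
      exacts [sub_nonneg.2 hloss, hP.1.1 _ _ _ _]
    · simp only [q, Fintype.sum_option, Option.elim, Fintype.sum_prod_type]
      exact sub_add_cancel 1 (loss s P)
  have hQ : ∀ o, Q o ∈ nonSignallingPolytope := by
    rintro (_ | e)
    exacts [⟨isBehaviour_prBox s, nonSignalling_prBox s⟩,
      ⟨(hD e).isBehaviour, (hD e).nonSignalling⟩]
  refine ⟨q, hq, Q, rfl, rfl, hD, eq_of_losing_eq hs hP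
    (convex_nonSignallingPolytope.sum_mem (fun o _ => hq.1 o) hq.2 fun o _ => hQ o)
    fun a x y => ?_⟩
  simp only [Finset.sum_apply, Pi.smul_apply, smul_eq_mul, Fintype.sum_option, q, Q, Option.elim,
    prBox_losing, mul_zero, zero_add, hlosing, mul_ite, mul_one, Finset.sum_ite_eq',
    Finset.mem_univ, if_true]

lemma isGreatest_FHVLocalWeights_loss (hP : P ∈ nonSignallingPolytope) (hs : IsCHSHPattern s)
    (hloss : loss s P ≤ 1) {p : Fin 2 → Fin 2 → ℝ} (hp : IsSettingDist p) :
    IsGreatest (FHVLocalWeights 2 P p) (loss s P) := by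
  constructor
  · obtain ⟨q, hq, Q, hnone, hpr, hprod, hPQ⟩ := exists_prBox_decomposition hP hs hloss
    have hQ : ∀ o, IsBehaviour (Q o) := by
      rintro (_ | e)
      exacts [hpr ▸ isBehaviour_prBox s, (hprod e).isBehaviour]
    have hpr' : ¬ IsProduct (Q none) := fun h => by
      have := h.one_le_loss hs
      rw [hpr, loss_prBox] at this
      exact absurd this (by norm_num)
    have hsum : q none + ∑ e, q (some e) = 1 := Fintype.sum_option q ▸ hq.2
    have hmem := sum_isProduct_mem_FHVLocalWeights hq hQ hPQ hp
    simp only [Fintype.sum_option, hpr', hprod, if_true, if_false, zero_add] at hmem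
    rwa [show loss s P = ∑ e, q (some e) by linarith]
  · rintro _ ⟨N, hN, rfl⟩
    exact hN.localWeight_le_loss fun Q hQ => hQ.one_le_loss hs

end NonlocalCase

section LocalCase

lemma exists_mem_stdSimplex_eq_sum_mul {ι : Type*} [Fintype ι] [Nonempty ι] {t : ι → ℝ}
    (ht : ∀ i, 0 ≤ t i) : ∃ r ∈ stdSimplex ℝ ι, ∀ i, t i = (∑ j, t j) * r i := by
  by_cases h : ∑ j, t j = 0
  · refine ⟨_, single_mem_stdSimplex ℝ (Classical.arbitrary ι), fun i => ?_⟩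
    rw [h, zero_mul]
    exact (Finset.sum_eq_zero_iff_of_nonneg fun j _ => ht j).1 h i (Finset.mem_univ i)
  · refine ⟨fun i => t i / ∑ j, t j, ⟨fun i => ?_, ?_⟩, fun i => (mul_div_cancel₀ _ h).symm⟩
    · exact div_nonneg (ht i) (Finset.sum_nonneg fun j _ => ht j)
    · rw [← Finset.sum_div, div_self h]

lemma exists_sign_correlation {ι : Type*} [Nonempty ι] {u v : ι → ℝ}
    (h : ∀ i j σ τ, 0 ≤ 2 + outVal σ * (u i + v i) + outVal τ * (u j - v j)) :
    ∃ e, ∀ i b c, 0 ≤ 1 + outVal b * u i + outVal c * v i + outVal b * outVal c * e := by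
  obtain ⟨e, hlower, hupper⟩ := exists_between_of_forall_le
    (Set.range_nonempty fun k : ι × Bool => -(1 + outVal k.2 * (u k.1 + v k.1)))
    (Set.range_nonempty fun k : ι × Bool => 1 + outVal k.2 * (u k.1 - v k.1))
    (by rintro _ ⟨⟨i, σ⟩, rfl⟩ _ ⟨⟨j, τ⟩, rfl⟩; linarith [h i j σ τ])
  refine ⟨e, fun i b c => ?_⟩
  have hl := hlower ⟨(i, b), rfl⟩
  have hu := hupper ⟨(i, b), rfl⟩
  cases b <;> cases c <;> simp only [outVal_true, outVal_false] at hl hu ⊢ <;> linarith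

/-- The hypotheses say that the outcome pairs `(a, b)`, `(a, c)`, `(b, c)` and `(a b, a c)` have
joint distributions with the given expectations; `k` is the expectation of `a b c`. -/
lemma exists_triple_product {A B C D E F : ℝ}
    (hAB : ∀ a b, 0 ≤ 1 + outVal a * A + outVal b * B + outVal a * outVal b * D)
    (hAC : ∀ a c, 0 ≤ 1 + outVal a * A + outVal c * C + outVal a * outVal c * E)
    (hBC : ∀ b c, 0 ≤ 1 + outVal b * B + outVal c * C + outVal b * outVal c * F)
    (hABC : ∀ b c, 0 ≤ 1 + outVal b * D + outVal c * E + outVal b * outVal c * F) :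
    ∃ k, ∀ a b c, 0 ≤ 1 + outVal a * A + outVal b * B + outVal c * C + outVal a * outVal b * D +
      outVal a * outVal c * E + outVal b * outVal c * F + outVal a * outVal b * outVal c * k := by
  let base (a b c : Bool) : ℝ := 1 + outVal a * A + outVal b * B + outVal c * C +
    outVal a * outVal b * D + outVal a * outVal c * E + outVal b * outVal c * F
  obtain ⟨k, hlower, hupper⟩ := exists_between_of_forall_le
    (Set.range_nonempty fun i : Bool × Bool => -base (!(i.1 ^^ i.2)) i.1 i.2)
    (Set.range_nonempty fun i : Bool × Bool => base (i.1 ^^ i.2) i.1 i.2) (by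
      rintro _ ⟨⟨b, c⟩, rfl⟩ _ ⟨⟨b', c'⟩, rfl⟩
      simp only [Bool.forall_bool] at hAB hAC hBC hABC
      cases b <;> cases c <;> cases b' <;> cases c' <;>
        simp only [base, outVal_xor, outVal_not, outVal_true,
          outVal_false] at hAB hAC hBC hABC ⊢ <;>
        linarith)
  refine ⟨k, fun a b c => ?_⟩
  have hl := hlower ⟨(b, c), rfl⟩
  have hu := hupper ⟨(b, c), rfl⟩
  cases a <;> cases b <;> cases c <;>
    simp only [base, outVal_xor, outVal_not, outVal_true, outVal_false] at hl hu ⊢ <;>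
    linarith

lemma exists_common_correlation {ι : Type*} [Nonempty ι] {A : ι → ℝ} {B : Fin 2 → ℝ}
    {E : ι → Fin 2 → ℝ}
    (hpos : ∀ a b x y, 0 ≤ 1 + outVal a * A x + outVal b * B y + outVal a * outVal b * E x y)
    (hchsh : ∀ x x', x ≠ x' → ∀ σ τ,
      0 ≤ 2 + outVal σ * (E x 0 + E x 1) + outVal τ * (E x' 0 - E x' 1)) :
    ∃ e, (∀ b c, 0 ≤ 1 + outVal b * B 0 + outVal c * B 1 + outVal b * outVal c * e) ∧
      ∀ x b c, 0 ≤ 1 + outVal b * E x 0 + outVal c * E x 1 + outVal b * outVal c * e := by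
  -- The index `none` stands for the constraints on Bob's correlation that come from `B` alone.
  let u : Option ι → Fin 2 → ℝ := fun i => i.elim B E
  have hsingle : ∀ x, ∀ i ∈ ({none, some x} : Set (Option ι)), ∀ j ∈ ({none, some x} : Set _),
      ∀ σ τ, 0 ≤ 2 + outVal σ * (u i 0 + u i 1) + outVal τ * (u j 0 - u j 1) := by
    intro x i hi j hj σ τ
    have h0 := (hpos · · x 0)
    have h1 := (hpos · · x 1)
    simp only [Bool.forall_bool] at h0 h1
    rcases hi with rfl | rfl <;> rcases hj with rfl | rfl <;> cases σ <;> cases τ <;>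
      simp only [u, Option.elim, outVal_true, outVal_false] at h0 h1 ⊢ <;> linarith
  have hu : ∀ i j σ τ, 0 ≤ 2 + outVal σ * (u i 0 + u i 1) + outVal τ * (u j 0 - u j 1) := by
    rintro (_ | x) (_ | x')
    · exact hsingle (Classical.arbitrary ι) none (by simp) none (by simp)
    · exact hsingle x' none (by simp) (some x') (by simp)
    · exact hsingle x (some x) (by simp) none (by simp)
    · rcases eq_or_ne x x' with rfl | hx
      exacts [hsingle x (some x) (by simp) (some x) (by simp), hchsh x x' hx]
  obtain ⟨e, he⟩ := exists_sign_correlation hu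
  exact ⟨e, he none, fun x => he (some x)⟩

lemma exists_joint_distribution {ι : Type*} [Nonempty ι] {A : ι → ℝ} {B : Fin 2 → ℝ}
    {E : ι → Fin 2 → ℝ}
    (hpos : ∀ a b x y, 0 ≤ 1 + outVal a * A x + outVal b * B y + outVal a * outVal b * E x y)
    (hchsh : ∀ x x', x ≠ x' → ∀ σ τ,
      0 ≤ 2 + outVal σ * (E x 0 + E x 1) + outVal τ * (E x' 0 - E x' 1)) :
    ∃ (T : ι → Bool → Bool → Bool → ℝ) (J : Bool → Bool → ℝ), (∀ x a b c, 0 ≤ T x a b c) ∧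
      (∀ x b c, ∑ a, T x a b c = J b c) ∧
      (∀ x a b, ∑ c, T x a b c =
        (1 + outVal a * A x + outVal b * B 0 + outVal a * outVal b * E x 0) / 4) ∧
      ∀ x a c, ∑ b, T x a b c =
        (1 + outVal a * A x + outVal c * B 1 + outVal a * outVal c * E x 1) / 4 := by
  obtain ⟨e, heB, heE⟩ := exists_common_correlation hpos hchsh
  choose k hk using fun x => exists_triple_product (hpos · · x 0) (hpos · · x 1) heB (heE x)
  refine ⟨fun x a b c => (1 + outVal a * A x + outVal b * B 0 + outVal c * B 1 +
      outVal a * outVal b * E x 0 + outVal a * outVal c * E x 1 + outVal b * outVal c * e +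
      outVal a * outVal b * outVal c * k x) / 8,
    fun b c => (1 + outVal b * B 0 + outVal c * B 1 + outVal b * outVal c * e) / 4,
    fun x a b c => div_nonneg (hk x a b c) (by norm_num), fun x b c => ?_, fun x a b => ?_,
    fun x a c => ?_⟩ <;> rw [Fintype.sum_bool] <;>
    simp only [outVal_true, outVal_false] <;> ring

lemma exists_isProduct_mixture {M : ℕ} [NeZero M] {P : Bool → Bool → Fin M → Fin 2 → ℝ}
    (hP : IsBehaviour P) {T : Fin M → Bool → Bool → Bool → ℝ} {J : Bool → Bool → ℝ}
    (hT : ∀ x a b c, 0 ≤ T x a b c) (hJ : ∀ x b c, ∑ a, T x a b c = J b c)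
    (hP₀ : ∀ x a b, ∑ c, T x a b c = P a b x 0) (hP₁ : ∀ x a c, ∑ b, T x a b c = P a c x 1) :
    ∃ q ∈ stdSimplex ℝ (Bool × Bool), ∃ Q : Bool × Bool → Bool → Bool → Fin M → Fin 2 → ℝ,
      (∀ i, IsProduct (Q i)) ∧ P = ∑ i, q i • Q i := by
  have hcond : ∀ (i : Bool × Bool) x, ∃ r ∈ stdSimplex ℝ Bool,
      ∀ a, T x a i.1 i.2 = J i.1 i.2 * r a := fun i x =>
    hJ x i.1 i.2 ▸ exists_mem_stdSimplex_eq_sum_mul (hT x · i.1 i.2)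
  choose α hα hαT using hcond
  refine ⟨fun i => J i.1 i.2, ⟨fun i => ?_, ?_⟩, fun i a b x y =>
    α i x a * (Pi.single (if y = 0 then i.1 else i.2) 1 : Bool → ℝ) b, fun i =>
    ⟨α i, _, hα i, fun y => single_mem_stdSimplex ℝ _, fun _ _ _ _ => rfl⟩, ?_⟩
  · change 0 ≤ J i.1 i.2
    rw [← hJ 0]
    exact Finset.sum_nonneg fun a _ => hT 0 a i.1 i.2
  · have hsum := hP.2 0 0
    simp only [← hP₀, Fintype.sum_bool] at hsum
    simp only [← hJ 0, Fintype.sum_prod_type, Fintype.sum_bool]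
    linarith
  · funext a b x y
    simp only [Finset.sum_apply, Pi.smul_apply, smul_eq_mul, ← mul_assoc, ← hαT,
      Fintype.sum_prod_type]
    fin_cases y
    · simp [← hP₀, Pi.single_apply]
    · simp [← hP₁, Pi.single_apply]

variable {P : Bool → Bool → Fin 2 → Fin 2 → ℝ}

/-- Fine's theorem. -/
lemma exists_isProduct_mixture_of_chsh_le_two (hP : P ∈ nonSignallingPolytope)
    (hchsh : ∀ s, IsCHSHPattern s → chsh s P ≤ 2) :
    ∃ q ∈ stdSimplex ℝ (Bool × Bool), ∃ Q : Bool × Bool → Bool → Bool → Fin 2 → Fin 2 → ℝ,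
      (∀ i, IsProduct (Q i)) ∧ P = ∑ i, q i • Q i := by
  obtain ⟨A, B, hPAB⟩ := exists_eq_expectations hP
  have hpos : ∀ a b x y,
      0 ≤ 1 + outVal a * A x + outVal b * B y + outVal a * outVal b * corr P x y := by
    intro a b x y
    linarith [hPAB a b x y, hP.1.1 a b x y]
  have hrows : ∀ x z, x ≠ z → ∀ σ τ,
      0 ≤ 2 + outVal σ * (corr P x 0 + corr P x 1) + outVal τ * (corr P z 0 - corr P z 1) := by
    intro x z hx σ τ
    -- The signs `-σ, -σ` in row `x` and `-τ, τ` in row `z`.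
    have h := hchsh (fun w y => if w = x then !σ else τ ^^ decide (y = 0))
    fin_cases x <;> fin_cases z <;> simp at hx <;> cases σ <;> cases τ <;>
      simp [IsCHSHPattern, chsh, outVal] at h ⊢ <;> linarith
  obtain ⟨T, J, hT, hJ, hT₀, hT₁⟩ := exists_joint_distribution hpos hrows
  simp only [← hPAB] at hT₀ hT₁
  exact exists_isProduct_mixture hP.1 hT hJ hT₀ hT₁

lemma isGreatest_FHVLocalWeights_one (hP : P ∈ nonSignallingPolytope)
    (hchsh : ∀ s, IsCHSHPattern s → chsh s P ≤ 2) {p : Fin 2 → Fin 2 → ℝ}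
    (hp : IsSettingDist p) : IsGreatest (FHVLocalWeights 2 P p) 1 := by
  constructor
  · obtain ⟨q, hq, Q, hQ, hPQ⟩ := exists_isProduct_mixture_of_chsh_le_two hP hchsh
    have hmem := sum_isProduct_mem_FHVLocalWeights hq (fun i => (hQ i).isBehaviour) hPQ hp
    simpa only [hQ, if_true, hq.2] using hmem
  · rintro _ ⟨N, -, rfl⟩
    exact N.localWeight_le_one

end LocalCase

theorem muL_of_nonsignalling_CHSH (P : Bool → Bool → Fin 2 → Fin 2 → ℝ)
    (hP : IsBehaviour P) (hNS : NonSignalling P) :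
    (2 < Smax P → muL 2 P = (4 - Smax P) / 2) ∧
    (Smax P ≤ 2 → muL 2 P = 1) := by
  obtain ⟨⟨s, hs, hsmax⟩, hmax⟩ := isGreatest_Smax P
  constructor <;> intro hS
  · have hloss : loss s P = (4 - Smax P) / 2 := hsmax ▸ loss_eq_chsh s hP
    rw [← hloss]
    exact muL_eq_of_isGreatest fun p hp =>
      isGreatest_FHVLocalWeights_loss ⟨hP, hNS⟩ hs (by linarith) hp
  · have hchsh : ∀ t, IsCHSHPattern t → chsh t P ≤ 2 := fun t ht =>
      (hmax ⟨t, ht, rfl⟩).trans hS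
    exact muL_eq_of_isGreatest fun p hp => isGreatest_FHVLocalWeights_one ⟨hP, hNS⟩ hchsh hp
end
end

section
/- For every non-signalling behaviour P with two settings x,y ∈ {0,1}, the measure of free choice satisfies μ_F(P) = (4 − S_max)/2 if S_max > 2, and μ_F(P) = 1 if S_max ≤ 2, where S_max is the maximal absolute value of the four CHSH expressions of P. -/
/-!
For every setting distribution the largest free weight of an LHV model of `P` is
`min 1 ((4 - Smax P) / 2)`, so the infimum over setting distributions is trivial.

*Upper bound.* A free local point contributes at most `2` times its weight to a CHSH expression,
any other point at most `4` times its weight.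

*Attainment.* If `Smax P > 2`, subtract from `P` a Popescu–Rohrlich box of weight
`(Smax P - 2) / 2` for the maximal CHSH expression. The remainder is nonnegative at a pair of
settings by chaining the marginals through the other three pairs, and it satisfies the CHSH
inequalities because the absolute values of two different CHSH expressions add up to at most `4`.
By Fine's theorem the remainder is a mixture of product distributions, whose components serve as
free points; the subtracted box is simulated by points with constant outcomes and setting-dependent
weights.
-/

open scoped BigOperators Classical
open Finset

noncomputable section

/-! ### Bell expressions and the bound on the free weight -/

/-- The Bell expression with coefficients `s`, evaluated at a table of correlators `C`. -/
def bell {M N : ℕ} (s C : Fin M → Fin N → ℝ) : ℝ :=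
  ∑ x, ∑ y, s x y * C x y

lemma abs_bell_le {M N : ℕ} (s C : Fin M → Fin N → ℝ) :
    |bell s C| ≤ ∑ x, ∑ y, |s x y| * |C x y| := by
  simp only [← abs_mul]
  exact (abs_sum_le_sum_abs _ _).trans (sum_le_sum fun x _ => abs_sum_le_sum_abs _ _)

lemma bell_mul_const {M N : ℕ} (s C : Fin M → Fin N → ℝ) (c : ℝ) :
    bell s (fun x y => C x y * c) = bell s C * c := by
  simp only [bell, sum_mul, mul_assoc]

lemma bell_sub_mul {M N : ℕ} (s C : Fin M → Fin N → ℝ) (c : ℝ) (D : Fin M → Fin N → ℝ) :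
    bell s (fun x y => C x y - c * D x y) = bell s C - c * bell s D := by
  simp only [bell, mul_sum, ← sum_sub_distrib]
  exact sum_congr rfl fun x _ => sum_congr rfl fun y _ => by ring

lemma abs_sum_outVal_mul_le_one {α : Bool → ℝ} (hα : α ∈ stdSimplex ℝ Bool) :
    |∑ a, outVal a * α a| ≤ 1 := by
  obtain ⟨hpos, hsum⟩ := hα
  rw [Fintype.sum_bool] at hsum
  simp only [Fintype.sum_bool, outVal, if_true, Bool.false_eq_true, if_false, abs_le]
  constructor <;> linarith [hpos true, hpos false]

namespace HVModel

variable {M : ℕ} {P : Bool → Bool → Fin M → Fin M → ℝ} {p : Fin M → Fin M → ℝ}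

lemma corr_eq_sum (N : HVModel M P p) (x y : Fin M) :
    corr P x y = ∑ l, corr (N.Pc l) x y * N.qc x y l := by
  simp only [corr, N.reproduce, mul_sum, sum_mul]
  rw [sum_comm_cycle]
  simp only [mul_assoc]

lemma IsLocalPoint.exists_corr_eq_mul {N : HVModel M P p} {l : Fin N.n} (h : N.IsLocalPoint l) :
    ∃ u v : Fin M → ℝ, (∀ x, |u x| ≤ 1) ∧ (∀ y, |v y| ≤ 1) ∧
      corr (N.Pc l) = fun x y => u x * v y := by
  obtain ⟨α, β, hα, hα_sum, hβ, hβ_sum, hαβ⟩ := h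
  refine ⟨fun x => ∑ a, outVal a * α a x, fun y => ∑ b, outVal b * β b y,
    fun x => abs_sum_outVal_mul_le_one ⟨fun a => hα a x, hα_sum x⟩,
    fun y => abs_sum_outVal_mul_le_one ⟨fun b => hβ b y, hβ_sum y⟩, ?_⟩
  funext x y
  rw [sum_mul_sum]
  exact sum_congr rfl fun a _ => sum_congr rfl fun b _ => by rw [hαβ]; ring

lemma freeWeight_le_one (N : HVModel M P p) : N.freeWeight ≤ 1 := by
  rw [← N.q_sum]
  refine sum_le_sum fun l _ => ?_
  split_ifs
  exacts [le_rfl, N.q_nonneg l]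

lemma IsLocalPoint.abs_bell_le {N : HVModel M P p} {l : Fin N.n} (h : N.IsLocalPoint l)
    (s : Fin M → Fin M → ℝ) {L : ℝ}
    (hL : ∀ u v : Fin M → ℝ, (∀ x, |u x| ≤ 1) → (∀ y, |v y| ≤ 1) →
      |bell s fun x y => u x * v y| ≤ L) :
    |bell s fun x y => corr (N.Pc l) x y * N.qc x y l| ≤
      ∑ x, ∑ y, |s x y| * N.qc x y l -
        (∑ x, ∑ y, |s x y| - L) * if N.IsFreePoint l then N.q l else 0 := by
  obtain ⟨u, v, hu, hv, huv⟩ := h.exists_corr_eq_mul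
  rw [huv]
  split_ifs with hfree
  · simp only [hfree _ _, bell_mul_const, ← sum_mul, abs_mul, abs_of_nonneg (N.q_nonneg l)]
    linarith [mul_le_mul_of_nonneg_right (hL u v hu hv) (N.q_nonneg l)]
  · rw [mul_zero, sub_zero]
    refine (_root_.abs_bell_le _ _).trans (sum_le_sum fun x _ => sum_le_sum fun y _ => ?_)
    refine mul_le_mul_of_nonneg_left ?_ (abs_nonneg _)
    rw [abs_mul, abs_mul, abs_of_nonneg (N.qc_nonneg x y l)]
    exact mul_le_of_le_one_left (N.qc_nonneg x y l)
      (mul_le_one₀ (hu x) (abs_nonneg _) (hv y))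

theorem IsLHV.abs_bell_corr_le {N : HVModel M P p} (hN : N.IsLHV) (s : Fin M → Fin M → ℝ) {L : ℝ}
    (hL : ∀ u v : Fin M → ℝ, (∀ x, |u x| ≤ 1) → (∀ y, |v y| ≤ 1) →
      |bell s fun x y => u x * v y| ≤ L) :
    |bell s (corr P)| ≤ ∑ x, ∑ y, |s x y| - (∑ x, ∑ y, |s x y| - L) * N.freeWeight := by
  have bell_eq : bell s (corr P) = ∑ l, bell s fun x y => corr (N.Pc l) x y * N.qc x y l := by
    simp only [bell, N.corr_eq_sum, mul_sum]
    rw [sum_comm_cycle]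
  have sum_qc : ∑ l, ∑ x, ∑ y, |s x y| * N.qc x y l = ∑ x, ∑ y, |s x y| := by
    rw [← sum_comm_cycle]
    simp only [← mul_sum, N.qc_sum, mul_one]
  calc |bell s (corr P)|
      ≤ ∑ l, |bell s fun x y => corr (N.Pc l) x y * N.qc x y l| :=
        bell_eq ▸ abs_sum_le_sum_abs _ _
    _ ≤ ∑ l, (∑ x, ∑ y, |s x y| * N.qc x y l -
          (∑ x, ∑ y, |s x y| - L) * if N.IsFreePoint l then N.q l else 0) :=
        sum_le_sum fun l _ => (hN l).abs_bell_le s hL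
    _ = _ := by rw [sum_sub_distrib, sum_qc, ← mul_sum, freeWeight]

end HVModel

/-! ### The CHSH expressions -/

/-- The coefficients of the CHSH expression whose minus sign is at the settings `(i, j)`, so that
`S1, S2, S3, S4` belong to `(1, 1), (1, 0), (0, 1), (0, 0)`. -/
def chshSign (i j x y : Fin 2) : ℝ := if x = i ∧ y = j then -1 else 1

lemma abs_chshSign (i j x y : Fin 2) : |chshSign i j x y| = 1 := by
  unfold chshSign
  split_ifs <;> simp

/-- Settings are listed relative to a chosen pair `(x, y)`; the other setting of a party is
`x + 1` or `y + 1` in `Fin 2`. -/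
lemma bell_fin_two (s C : Fin 2 → Fin 2 → ℝ) (x y : Fin 2) :
    bell s C = s x y * C x y + s x (y + 1) * C x (y + 1) + s (x + 1) y * C (x + 1) y +
      s (x + 1) (y + 1) * C (x + 1) (y + 1) := by
  fin_cases x <;> fin_cases y <;> simp [bell] <;> ring

lemma bell_chshSign (C : Fin 2 → Fin 2 → ℝ) (i j : Fin 2) :
    bell (chshSign i j) C = C i (j + 1) + C (i + 1) j + C (i + 1) (j + 1) - C i j := by
  rw [bell_fin_two _ _ i j]
  simp only [chshSign, and_self, if_true, add_eq_left, one_ne_zero, and_false, false_and, if_false]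
  ring

lemma prod_chshSign (i j x y : Fin 2) :
    chshSign i j x y * chshSign i j x (y + 1) * chshSign i j (x + 1) y *
      chshSign i j (x + 1) (y + 1) = -1 := by
  fin_cases i <;> fin_cases j <;> fin_cases x <;> fin_cases y <;> simp [chshSign]

lemma bell_chshSign_chshSign (i j i' j' : Fin 2) :
    bell (chshSign i j) (chshSign i' j') = if (i, j) = (i', j') then 4 else 0 := by
  fin_cases i <;> fin_cases j <;> fin_cases i' <;> fin_cases j' <;>
    norm_num [bell, chshSign]

lemma abs_add_add_abs_sub_le {u v w : ℝ} (hu : |u| ≤ w) (hv : |v| ≤ w) :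
    |u + v| + |u - v| ≤ 2 * w := by
  rw [abs_le] at hu hv
  rcases abs_cases (u + v) with h | h <;> rcases abs_cases (u - v) with h' | h' <;> linarith

lemma abs_bell_chshSign_mul_le (i j : Fin 2) {u v : Fin 2 → ℝ} (hu : ∀ x, |u x| ≤ 1)
    (hv : ∀ y, |v y| ≤ 1) : |bell (chshSign i j) fun x y => u x * v y| ≤ 2 := by
  calc |bell (chshSign i j) fun x y => u x * v y|
      = |u (i + 1) * (v j + v (j + 1)) - u i * (v j - v (j + 1))| := by
        rw [bell_chshSign]; ring_nf
    _ ≤ |u (i + 1)| * |v j + v (j + 1)| + |u i| * |v j - v (j + 1)| := by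
        rw [← abs_mul, ← abs_mul]; exact abs_sub _ _
    _ ≤ 1 * |v j + v (j + 1)| + 1 * |v j - v (j + 1)| := by gcongr <;> exact hu _
    _ ≤ 2 := by linarith [abs_add_add_abs_sub_le (hv j) (hv (j + 1))]

lemma sum_abs_chshSign_add_mul {i j i' j' : Fin 2} (h : (i, j) ≠ (i', j')) {σ : ℝ} (hσ : |σ| = 1) :
    ∑ x, ∑ y, |chshSign i j x y + σ * chshSign i' j' x y| = 4 := by
  rcases eq_or_eq_neg_of_abs_eq hσ with rfl | rfl <;>
    fin_cases i <;> fin_cases j <;> fin_cases i' <;> fin_cases j' <;>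
    first | exact absurd rfl h | norm_num [chshSign]

lemma abs_bell_chshSign_add_le {w : ℝ} {C : Fin 2 → Fin 2 → ℝ} (hC : ∀ x y, |C x y| ≤ w)
    {i j i' j' : Fin 2} (h : (i, j) ≠ (i', j')) :
    |bell (chshSign i j) C| + |bell (chshSign i' j') C| ≤ 4 * w := by
  have key : ∀ σ : ℝ, |σ| = 1 →
      |bell (chshSign i j) C + σ * bell (chshSign i' j') C| ≤ 4 * w := fun σ hσ =>
    calc |bell (chshSign i j) C + σ * bell (chshSign i' j') C|
        = |bell (fun x y => chshSign i j x y + σ * chshSign i' j' x y) C| := by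
          simp only [bell, mul_sum, ← sum_add_distrib, add_mul, mul_assoc]
      _ ≤ ∑ x, ∑ y, |chshSign i j x y + σ * chshSign i' j' x y| * w :=
          (abs_bell_le _ _).trans (sum_le_sum fun x _ => sum_le_sum fun y _ =>
            mul_le_mul_of_nonneg_left (hC x y) (abs_nonneg _))
      _ = 4 * w := by simp only [← sum_mul, sum_abs_chshSign_add_mul h hσ]
  have hadd := abs_le.1 (key 1 abs_one)
  have hsub := abs_le.1 (key (-1) (by rw [abs_neg, abs_one]))
  rcases abs_cases (bell (chshSign i j) C) with hp | hp <;>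
    rcases abs_cases (bell (chshSign i' j') C) with hq | hq <;> linarith

lemma Smax_le_iff {P : Bool → Bool → Fin 2 → Fin 2 → ℝ} {t : ℝ} :
    Smax P ≤ t ↔ ∀ i j, |bell (chshSign i j) (corr P)| ≤ t := by
  have h1 : S1 P = bell (chshSign 1 1) (corr P) := by
    rw [bell_chshSign, S1]; simp only [Fin.isValue, Fin.reduceAdd]; ring
  have h2 : S2 P = bell (chshSign 1 0) (corr P) := by
    rw [bell_chshSign, S2]; simp only [Fin.isValue, Fin.reduceAdd]; ring
  have h3 : S3 P = bell (chshSign 0 1) (corr P) := by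
    rw [bell_chshSign, S3]; simp only [Fin.isValue, Fin.reduceAdd]; ring
  have h4 : S4 P = bell (chshSign 0 0) (corr P) := by
    rw [bell_chshSign, S4]; simp only [Fin.isValue, Fin.reduceAdd]; ring
  simp only [Smax, max_le_iff, Fin.forall_fin_two, h1, h2, h3, h4]
  tauto

lemma exists_abs_bell_eq_Smax (P : Bool → Bool → Fin 2 → Fin 2 → ℝ) :
    ∃ i j, |bell (chshSign i j) (corr P)| = Smax P := by
  obtain ⟨⟨i, j⟩, hmax⟩ :=
    Finite.exists_max fun k : Fin 2 × Fin 2 => |bell (chshSign k.1 k.2) (corr P)|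
  exact ⟨i, j, (Smax_le_iff.1 le_rfl i j).antisymm (Smax_le_iff.2 fun i' j' => hmax (i', j'))⟩

lemma HVModel.IsLHV.Smax_le {P : Bool → Bool → Fin 2 → Fin 2 → ℝ} {p : Fin 2 → Fin 2 → ℝ}
    {N : HVModel 2 P p} (hN : N.IsLHV) : Smax P ≤ 4 - 2 * N.freeWeight := by
  refine Smax_le_iff.2 fun i j => ?_
  have h := hN.abs_bell_corr_le (chshSign i j) fun u v => abs_bell_chshSign_mul_le i j
  simp only [abs_chshSign, sum_const, card_univ, Fintype.card_fin, nsmul_eq_mul] at h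
  norm_num at h
  exact h

/-! ### Models built from a local sub-table -/

/-- A (possibly subnormalised) table of total mass `w` that is a mixture of product tables with
nonnegative weights `r`. -/
def IsLocalTable {X Y : Type*} (w : ℝ) (Q : Bool → Bool → X → Y → ℝ) : Prop :=
  ∃ (Λ : Type) (_ : Fintype Λ) (r : Λ → ℝ) (α : Λ → X → Bool → ℝ) (β : Λ → Y → Bool → ℝ),
    (∀ l, 0 ≤ r l) ∧ ∑ l, r l = w ∧
    (∀ l x, α l x ∈ stdSimplex ℝ Bool) ∧ (∀ l y, β l y ∈ stdSimplex ℝ Bool) ∧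
    ∀ a b x y, Q a b x y = ∑ l, α l x a * β l y b * r l

lemma sum_sum_mul_eq_one {ι κ : Type*} [Fintype ι] [Fintype κ] {f : ι → ℝ} {g : κ → ℝ}
    (hf : f ∈ stdSimplex ℝ ι) (hg : g ∈ stdSimplex ℝ κ) : ∑ i, ∑ j, f i * g j = 1 := by
  rw [← sum_mul_sum, hf.2, hg.2, one_mul]

lemma IsLocalTable.sum_eq {X Y : Type*} {w : ℝ} {Q : Bool → Bool → X → Y → ℝ}
    (hQ : IsLocalTable w Q) (x : X) (y : Y) : ∑ a, ∑ b, Q a b x y = w := by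
  obtain ⟨Λ, _, r, α, β, -, rfl, hα, hβ, hQ⟩ := hQ
  simp only [hQ]
  rw [sum_comm_cycle]
  simp only [← sum_mul, sum_sum_mul_eq_one (hα _ x) (hβ _ y), one_mul]

namespace HVModel

variable {M : ℕ} {P : Bool → Bool → Fin M → Fin M → ℝ} {p : Fin M → Fin M → ℝ}

/-- The model with hidden variables in a finite type `Λ`, drawn from `k x y` at the settings `x, y`
and answered by independent responses `α` and `β`. -/
def ofResponses {Λ : Type*} [Fintype Λ] (hp : IsSettingDist p) (k : Fin M → Fin M → Λ → ℝ)
    (α β : Λ → Fin M → Bool → ℝ) (hk : ∀ x y, k x y ∈ stdSimplex ℝ Λ)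
    (hα : ∀ l x, α l x ∈ stdSimplex ℝ Bool) (hβ : ∀ l y, β l y ∈ stdSimplex ℝ Bool)
    (hP : ∀ a b x y, P a b x y = ∑ l, α l x a * β l y b * k x y l) : HVModel M P p where
  n := Fintype.card Λ
  q i := ∑ x, ∑ y, k x y ((Fintype.equivFin Λ).symm i) * p x y
  q_nonneg i := sum_nonneg fun x _ => sum_nonneg fun y _ =>
    mul_nonneg ((hk x y).1 _) (hp.1 x y).le
  q_sum := by
    rw [← sum_comm_cycle]
    simp only [← sum_mul, (Fintype.equivFin Λ).symm.sum_comp (k _ _), (hk _ _).2, one_mul, hp.2]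
  qc x y i := k x y ((Fintype.equivFin Λ).symm i)
  qc_nonneg x y i := (hk x y).1 _
  qc_sum x y := ((Fintype.equivFin Λ).symm.sum_comp (k x y)).trans (hk x y).2
  q_marg i := rfl
  Pc i a b x y := α ((Fintype.equivFin Λ).symm i) x a * β ((Fintype.equivFin Λ).symm i) y b
  Pc_nonneg i a b x y := mul_nonneg ((hα _ x).1 a) ((hβ _ y).1 b)
  Pc_sum i x y := sum_sum_mul_eq_one (hα _ x) (hβ _ y)
  reproduce a b x y := by
    rw [hP, (Fintype.equivFin Λ).symm.sum_comp fun l => α l x a * β l y b * k x y l]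

lemma isLHV_ofResponses {Λ : Type*} [Fintype Λ] (hp : IsSettingDist p)
    (k : Fin M → Fin M → Λ → ℝ) (α β : Λ → Fin M → Bool → ℝ) (hk : ∀ x y, k x y ∈ stdSimplex ℝ Λ)
    (hα : ∀ l x, α l x ∈ stdSimplex ℝ Bool) (hβ : ∀ l y, β l y ∈ stdSimplex ℝ Bool)
    (hP : ∀ a b x y, P a b x y = ∑ l, α l x a * β l y b * k x y l) :
    (ofResponses hp k α β hk hα hβ hP).IsLHV := fun _ =>
  ⟨fun a x => α _ x a, fun b y => β _ y b, fun a x => (hα _ x).1 a, fun x => (hα _ x).2,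
    fun b y => (hβ _ y).1 b, fun y => (hβ _ y).2, fun _ _ _ _ => rfl⟩

lemma q_eq_of_forall_qc_eq (N : HVModel M P p) (hp : IsSettingDist p) {l : Fin N.n} {r : ℝ}
    (h : ∀ x y, N.qc x y l = r) : N.q l = r := by
  simp only [N.q_marg, h, ← mul_sum, hp.2, mul_one]

lemma sum_le_freeWeight_s2 (N : HVModel M P p) (hp : IsSettingDist p) {ι : Type*} [Fintype ι]
    (e : ι ↪ Fin N.n) {r : ι → ℝ} (h : ∀ x y i, N.qc x y (e i) = r i) :
    ∑ i, r i ≤ N.freeWeight := by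
  have q_eq : ∀ i, N.q (e i) = r i := fun i => N.q_eq_of_forall_qc_eq hp fun x y => h x y i
  have free : ∀ i, N.IsFreePoint (e i) := fun i x y => (h x y i).trans (q_eq i).symm
  calc ∑ i, r i = ∑ l ∈ univ.map e, if N.IsFreePoint l then N.q l else 0 := by
        simp only [sum_map, free, q_eq, if_true]
    _ ≤ N.freeWeight := sum_le_univ_sum_of_nonneg fun l => by
        split_ifs
        exacts [N.q_nonneg l, le_rfl]

end HVModel

/-- The components of the local sub-table `Q` are free points; the remainder `P - Q` is simulated by
drawing a constant pair of outcomes from it. -/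
theorem IsLocalTable.exists_isLHV {M : ℕ} {P Q : Bool → Bool → Fin M → Fin M → ℝ}
    {p : Fin M → Fin M → ℝ} {w : ℝ} (hQ : IsLocalTable w Q) (hP : IsBehaviour P)
    (hp : IsSettingDist p) (hQP : ∀ a b x y, Q a b x y ≤ P a b x y) :
    ∃ N : HVModel M P p, N.IsLHV ∧ w ≤ N.freeWeight := by
  have sum_Q := hQ.sum_eq
  obtain ⟨Λ, _, r, α, β, hr, rfl, hα, hβ, hQ⟩ := hQ
  let k : Fin M → Fin M → Λ ⊕ Bool × Bool → ℝ := fun x y =>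
    Sum.elim r fun o => P o.1 o.2 x y - Q o.1 o.2 x y
  let α' : Λ ⊕ Bool × Bool → Fin M → Bool → ℝ := Sum.elim α fun o _ => Pi.single o.1 1
  let β' : Λ ⊕ Bool × Bool → Fin M → Bool → ℝ := Sum.elim β fun o _ => Pi.single o.2 1
  have hk : ∀ x y, k x y ∈ stdSimplex ℝ (Λ ⊕ Bool × Bool) := by
    refine fun x y => ⟨Sum.forall.2 ⟨hr, fun o => sub_nonneg.2 (hQP _ _ x y)⟩, ?_⟩
    simp only [k, Fintype.sum_sum_type, Sum.elim_inl, Sum.elim_inr, Fintype.sum_prod_type,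
      sum_sub_distrib, hP.2, sum_Q, add_sub_cancel]
  have hα' : ∀ l x, α' l x ∈ stdSimplex ℝ Bool :=
    Sum.forall.2 ⟨hα, fun o _ => single_mem_stdSimplex ℝ o.1⟩
  have hβ' : ∀ l y, β' l y ∈ stdSimplex ℝ Bool :=
    Sum.forall.2 ⟨hβ, fun o _ => single_mem_stdSimplex ℝ o.2⟩
  have reproduce : ∀ a b x y, P a b x y = ∑ l, α' l x a * β' l y b * k x y l := by
    intro a b x y
    simp only [α', β', k, Fintype.sum_sum_type, Sum.elim_inl, Sum.elim_inr, ← hQ a b x y,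
      Fintype.sum_prod_type, Pi.single_apply, ite_mul, one_mul, zero_mul]
    simp
  refine ⟨.ofResponses hp k α' β' hk hα' hβ' reproduce,
    HVModel.isLHV_ofResponses hp k α' β' hk hα' hβ' reproduce, HVModel.sum_le_freeWeight_s2 _ hp
      (Function.Embedding.inl.trans (Fintype.equivFin _).toEmbedding) fun x y l => ?_⟩
  exact congrArg (k x y) ((Fintype.equivFin _).symm_apply_apply _)

/-! ### Fine's theorem -/

lemma exists_mem_stdSimplex_eq_mul_sum {ι : Type*} [Fintype ι] [Nonempty ι] {t : ι → ℝ}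
    (ht : ∀ i, 0 ≤ t i) : ∃ f ∈ stdSimplex ℝ ι, ∀ i, t i = f i * ∑ j, t j := by
  rcases eq_or_ne (∑ j, t j) 0 with h | h
  · refine ⟨_, single_mem_stdSimplex ℝ (Classical.arbitrary ι), fun i => ?_⟩
    rw [h, mul_zero, (sum_eq_zero_iff_of_nonneg fun j _ => ht j).1 h i (mem_univ i)]
  · refine ⟨fun i => t i / ∑ j, t j,
      ⟨fun i => div_nonneg (ht i) (sum_nonneg fun j _ => ht j), ?_⟩, fun i => ?_⟩
    · rw [← sum_div, div_self h]
    · rw [div_mul_cancel₀ _ h]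

/-- Here `t x` is a joint distribution of the hidden variable and Alice's outcome at setting `x`,
and `f` is Bob's deterministic response. -/
lemma isLocalTable_of_common_marginal {X Y : Type*} {Λ : Type} [Fintype Λ] {t : X → Λ → Bool → ℝ}
    {r : Λ → ℝ} (ht : ∀ x l a, 0 ≤ t x l a) (hr : ∀ l, 0 ≤ r l) (htr : ∀ x l, ∑ a, t x l a = r l)
    (f : Λ → Y → Bool) :
    IsLocalTable (∑ l, r l) fun a b x y => ∑ l, if b = f l y then t x l a else 0 := by
  choose α hα htα using fun l x => exists_mem_stdSimplex_eq_mul_sum (ht x l)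
  refine ⟨Λ, _, r, α, fun l y => Pi.single (f l y) 1, hr, rfl, hα,
    fun l y => single_mem_stdSimplex ℝ (f l y), fun a b x y => sum_congr rfl fun l _ => ?_⟩
  simp only [htα l x a, htr, Pi.single_apply]
  split_ifs <;> ring

/-- The unique table on `{±1}²` with mass `w`, means `u`, `v` and correlator `c`. -/
def pairTable (w u v c : ℝ) (a b : Bool) : ℝ :=
  (w + outVal a * u + outVal b * v + outVal a * outVal b * c) / 4

/-- The unique table on `{±1}³` with mass `w`, means `u, v₀, v₁`, correlators `c₀, c₁, d` of the
pairs `(a, b₀), (a, b₁), (b₀, b₁)` and triple correlator `τ`. -/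
def tripleTable (w u v₀ v₁ c₀ c₁ d τ : ℝ) (a b₀ b₁ : Bool) : ℝ :=
  (w + outVal a * u + outVal b₀ * v₀ + outVal b₁ * v₁ + outVal a * outVal b₀ * c₀ +
    outVal a * outVal b₁ * c₁ + outVal b₀ * outVal b₁ * d +
    outVal a * outVal b₀ * outVal b₁ * τ) / 8

/-- `w, u, v, c` are the mass, the means and the correlator of a nonnegative table on `{±1}²`. -/
def IsPairMoments (w u v c : ℝ) : Prop := ∀ a b, 0 ≤ pairTable w u v c a b

lemma isPairMoments_iff {w u v c : ℝ} :
    IsPairMoments w u v c ↔ |u + v| ≤ w + c ∧ |u - v| ≤ w - c := by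
  simp only [IsPairMoments, pairTable, outVal, Bool.forall_bool, if_true, Bool.false_eq_true,
    if_false, abs_le]
  constructor
  · rintro ⟨⟨_, _⟩, _, _⟩
    refine ⟨⟨?_, ?_⟩, ?_, ?_⟩ <;> linarith
  · rintro ⟨⟨_, _⟩, _, _⟩
    refine ⟨⟨?_, ?_⟩, ?_, ?_⟩ <;> linarith

section Marginals

variable (w u v v₀ v₁ c c₀ c₁ d τ : ℝ)

lemma sum_pairTable : ∑ a, ∑ b, pairTable w u v c a b = w := by
  simp only [Fintype.sum_bool, pairTable, outVal, if_true, Bool.false_eq_true, if_false]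
  ring

lemma sum_tripleTable_left (b₀ b₁ : Bool) :
    ∑ a, tripleTable w u v₀ v₁ c₀ c₁ d τ a b₀ b₁ = pairTable w v₀ v₁ d b₀ b₁ := by
  simp only [Fintype.sum_bool, pairTable, tripleTable, outVal, if_true, Bool.false_eq_true,
    if_false]
  ring

lemma sum_tripleTable_middle (a b₁ : Bool) :
    ∑ b₀, tripleTable w u v₀ v₁ c₀ c₁ d τ a b₀ b₁ = pairTable w u v₁ c₁ a b₁ := by
  simp only [Fintype.sum_bool, pairTable, tripleTable, outVal, if_true, Bool.false_eq_true,
    if_false]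
  ring

lemma sum_tripleTable_right (a b₀ : Bool) :
    ∑ b₁, tripleTable w u v₀ v₁ c₀ c₁ d τ a b₀ b₁ = pairTable w u v₀ c₀ a b₀ := by
  simp only [Fintype.sum_bool, pairTable, tripleTable, outVal, if_true, Bool.false_eq_true,
    if_false]
  ring

end Marginals

namespace IsPairMoments

variable {w u v c : ℝ}

lemma abs_corr_le (h : IsPairMoments w u v c) : |c| ≤ w := by
  obtain ⟨hadd, hsub⟩ := isPairMoments_iff.1 h
  rw [abs_le]
  constructor <;> linarith [abs_nonneg (u + v), abs_nonneg (u - v)]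

lemma abs_right_le (h : IsPairMoments w u v c) : |v| ≤ w := by
  obtain ⟨hadd, hsub⟩ := isPairMoments_iff.1 h
  rw [abs_le] at hadd hsub ⊢
  constructor <;> linarith

lemma abs_add_mul_le (h : IsPairMoments w u v c) {σ : ℝ} (hσ : |σ| = 1) :
    |u + σ * v| ≤ w + σ * c := by
  obtain ⟨hadd, hsub⟩ := isPairMoments_iff.1 h
  rcases eq_or_eq_neg_of_abs_eq hσ with rfl | rfl
  · simpa only [one_mul] using hadd
  · simpa only [neg_one_mul, ← sub_eq_add_neg] using hsub

end IsPairMoments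

lemma exists_forall_add_nonneg_and_sub_nonneg {ι κ : Type*} [Nonempty ι] [Nonempty κ]
    {f : ι → ℝ} {g : κ → ℝ} (h : ∀ i j, 0 ≤ f i + g j) :
    ∃ τ, (∀ i, 0 ≤ f i + τ) ∧ ∀ j, 0 ≤ g j - τ := by
  obtain ⟨τ, hf, hg⟩ := exists_between_of_forall_le (Set.range_nonempty fun i => -f i)
    (Set.range_nonempty g) (by
      rintro _ ⟨i, rfl⟩ _ ⟨j, rfl⟩
      exact neg_le_iff_add_nonneg'.2 (h i j))
  exact ⟨τ, fun i => neg_le_iff_add_nonneg'.1 (hf ⟨i, rfl⟩), fun j => sub_nonneg.2 (hg ⟨j, rfl⟩)⟩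

/-- `hc` encodes the triangle inequalities between the correlators, see `isPairMoments_iff`. With
them, each lower bound on `τ` from a nonnegative entry lies below each upper bound. -/
lemma exists_tripleTable_nonneg {w u v₀ v₁ c₀ c₁ d : ℝ} (h₀ : IsPairMoments w u v₀ c₀)
    (h₁ : IsPairMoments w u v₁ c₁) (hv : IsPairMoments w v₀ v₁ d) (hc : IsPairMoments w c₀ c₁ d) :
    ∃ τ, ∀ a b₀ b₁, 0 ≤ tripleTable w u v₀ v₁ c₀ c₁ d τ a b₀ b₁ := by
  simp only [IsPairMoments, pairTable, Bool.forall_bool, outVal, if_true, Bool.false_eq_true,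
    if_false] at h₀ h₁ hv hc
  obtain ⟨τ, hpos, hneg⟩ := exists_forall_add_nonneg_and_sub_nonneg
    (f := fun i : Bool × Bool => tripleTable w u v₀ v₁ c₀ c₁ d 0 i.1 i.2 (i.1 == i.2))
    (g := fun i : Bool × Bool => tripleTable w u v₀ v₁ c₀ c₁ d 0 i.1 i.2 (i.1 != i.2)) (by
      rintro ⟨_ | _, _ | _⟩ ⟨_ | _, _ | _⟩ <;>
        simp only [tripleTable, outVal, Bool.beq_eq_decide_eq, bne, Bool.true_eq_false,
          decide_true, decide_false, Bool.not_true, Bool.not_false, if_true, Bool.false_eq_true,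
          if_false] <;>
        linarith)
  refine ⟨8 * τ, fun a b₀ b₁ => ?_⟩
  have hp := hpos (a, b₀)
  have hn := hneg (a, b₀)
  cases a <;> cases b₀ <;> cases b₁ <;>
    simp only [tripleTable, outVal, Bool.beq_eq_decide_eq, bne, Bool.true_eq_false,
      decide_true, decide_false, Bool.not_true, Bool.not_false, if_true, Bool.false_eq_true,
      if_false] at hp hn ⊢ <;>
    linarith

lemma exists_common_corr {ι : Type*} [Nonempty ι] {w : ℝ} {u v : ι → ℝ}
    (h : ∀ i j, |u i + v i| + |u j - v j| ≤ 2 * w) : ∃ d, ∀ i, IsPairMoments w (u i) (v i) d := by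
  obtain ⟨d, hadd, hsub⟩ := exists_forall_add_nonneg_and_sub_nonneg
    (f := fun i => w - |u i + v i|) (g := fun j => w - |u j - v j|)
    fun i j => by linarith [h i j]
  exact ⟨d, fun i => isPairMoments_iff.2 ⟨by linarith [hadd i], by linarith [hsub i]⟩⟩

lemma IsPairMoments.abs_add_add_abs_sub_le {w u v₀ v₁ c₀ c₁ : ℝ} (h₀ : IsPairMoments w u v₀ c₀)
    (h₁ : IsPairMoments w u v₁ c₁) : |v₀ + v₁| + |c₀ - c₁| ≤ 2 * w := by
  simp only [isPairMoments_iff, abs_le] at h₀ h₁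
  rcases abs_cases (v₀ + v₁) with h | h <;> rcases abs_cases (c₀ - c₁) with h' | h' <;> linarith

lemma IsPairMoments.abs_sub_add_abs_add_le {w u v₀ v₁ c₀ c₁ : ℝ} (h₀ : IsPairMoments w u v₀ c₀)
    (h₁ : IsPairMoments w u v₁ c₁) : |c₀ + c₁| + |v₀ - v₁| ≤ 2 * w := by
  simp only [isPairMoments_iff, abs_le] at h₀ h₁
  rcases abs_cases (c₀ + c₁) with h | h <;> rcases abs_cases (v₀ - v₁) with h' | h' <;> linarith

/-- Fine's theorem. A correlator `d` of Bob's two potential outcomes that is compatible with each of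
Alice's settings gives triple tables with a common `(b₀, b₁)` marginal, and `(b₀, b₁)` serves as the
hidden variable. -/
theorem isLocalTable_pairTable {X : Type*} [Nonempty X] {w : ℝ} {A : X → ℝ} {B : Fin 2 → ℝ}
    {C : X → Fin 2 → ℝ} (h : ∀ x y, IsPairMoments w (A x) (B y) (C x y))
    (hC : ∀ x x', |C x 0 + C x 1| + |C x' 0 - C x' 1| ≤ 2 * w) :
    IsLocalTable w fun a b x y => pairTable w (A x) (B y) (C x y) a b := by
  obtain ⟨d, hd⟩ : ∃ d, ∀ i : Option X, IsPairMoments w (i.elim (B 0) fun x => C x 0)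
      (i.elim (B 1) fun x => C x 1) d := by
    have x₀ := Classical.arbitrary X
    refine exists_common_corr ?_
    rintro (_ | x) (_ | x')
    · exact abs_add_add_abs_sub_le (h x₀ 0).abs_right_le (h x₀ 1).abs_right_le
    · exact (h x' 0).abs_add_add_abs_sub_le (h x' 1)
    · exact (h x 0).abs_sub_add_abs_add_le (h x 1)
    · exact hC x x'
  choose τ hτ using fun x => exists_tripleTable_nonneg (h x 0) (h x 1) (hd none) (hd (some x))
  have key := isLocalTable_of_common_marginal (Y := Fin 2)
    (t := fun x (l : Bool × Bool) a =>
      tripleTable w (A x) (B 0) (B 1) (C x 0) (C x 1) d (τ x) a l.1 l.2)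
    (r := fun l => pairTable w (B 0) (B 1) d l.1 l.2) (fun x l a => hτ x a l.1 l.2)
    (fun l => hd none l.1 l.2) (fun x l => sum_tripleTable_left ..) fun l => ![l.1, l.2]
  rw [Fintype.sum_prod_type, sum_pairTable] at key
  convert key using 5 with a b x y
  fin_cases y
  · rw [Fintype.sum_prod_type_right]
    exact ((sum_congr rfl fun b₁ _ => Fintype.sum_ite_eq b _).trans
      (sum_tripleTable_right ..)).symm
  · rw [Fintype.sum_prod_type]
    exact ((sum_congr rfl fun b₀ _ => Fintype.sum_ite_eq b _).trans
      (sum_tripleTable_middle ..)).symm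

theorem isLocalTable_pairTable_of_chsh {w : ℝ} {A B : Fin 2 → ℝ} {C : Fin 2 → Fin 2 → ℝ}
    (h : ∀ x y, IsPairMoments w (A x) (B y) (C x y))
    (hC : ∀ i j, |bell (chshSign i j) C| ≤ 2 * w) :
    IsLocalTable w fun a b x y => pairTable w (A x) (B y) (C x y) a b := by
  refine isLocalTable_pairTable h fun x x' => ?_
  obtain rfl | rfl : x = x' ∨ x = x' + 1 := by revert x x'; decide
  · exact abs_add_add_abs_sub_le (h x 0).abs_corr_le (h x 1).abs_corr_le
  · have h₀ := hC x' 0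
    have h₁ := hC x' 1
    rw [bell_chshSign, abs_le] at h₀ h₁
    rw [zero_add] at h₀
    rw [show (1 + 1 : Fin 2) = 0 from rfl] at h₁
    rcases abs_cases (C (x' + 1) 0 + C (x' + 1) 1) with hp | hp <;>
      rcases abs_cases (C x' 0 - C x' 1) with hq | hq <;> linarith

/-! ### Subtracting a Popescu–Rohrlich box -/

lemma abs_add_mul_le_of_bell_eq {w k : ℝ} {A B : Fin 2 → ℝ} {C s : Fin 2 → Fin 2 → ℝ}
    (h : ∀ x y, IsPairMoments w (A x) (B y) (C x y)) (hs : ∀ x y, |s x y| = 1)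
    {x y : Fin 2} (hprod : s x y * s x (y + 1) * s (x + 1) y * s (x + 1) (y + 1) = -1)
    (hbell : bell s C = 2 * (w + k)) :
    |A x + s x y * B y| ≤ w + s x y * C x y - 2 * k := by
  have hneg : ∀ x y, |A x + -s x y * B y| ≤ w + -s x y * C x y := fun x y =>
    (h x y).abs_add_mul_le (by rw [abs_neg, hs])
  have sign_eq : s x y = -(s x (y + 1) * s (x + 1) (y + 1) * s (x + 1) y) := by
    rcases eq_or_eq_neg_of_abs_eq (hs x y) with e | e <;> rw [e] at hprod ⊢ <;> linarith
  have hsq : s (x + 1) (y + 1) * s (x + 1) (y + 1) = 1 := by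
    rw [← abs_mul_abs_self, hs, one_mul]
  set ε := s x (y + 1) * s (x + 1) (y + 1) with hε
  have abs_ε : |ε| = 1 := by rw [hε, abs_mul, hs, hs, one_mul]
  -- Walk from `x` to `y` through the other three pairs of settings.
  calc |A x + s x y * B y|
      = |(A x + -s x (y + 1) * B (y + 1))
          - ε * (A (x + 1) + -s (x + 1) (y + 1) * B (y + 1))
          + ε * (A (x + 1) + -s (x + 1) y * B y)| := by
        rw [sign_eq, hε]
        congr 1
        linear_combination (-s x (y + 1) * B (y + 1)) * hsq
    _ ≤ |A x + -s x (y + 1) * B (y + 1)|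
          + |A (x + 1) + -s (x + 1) (y + 1) * B (y + 1)|
          + |A (x + 1) + -s (x + 1) y * B y| := by
        refine (abs_add_le _ _).trans (add_le_add ((abs_sub _ _).trans ?_) ?_) <;>
          simp only [abs_mul, abs_ε, one_mul, le_refl]
    _ ≤ w + s x y * C x y - 2 * k := by
        rw [bell_fin_two s C x y] at hbell
        linarith [hneg x (y + 1), hneg (x + 1) (y + 1), hneg (x + 1) y]

lemma isPairMoments_sub_mul {w k : ℝ} {A B : Fin 2 → ℝ} {C s : Fin 2 → Fin 2 → ℝ}
    (h : ∀ x y, IsPairMoments w (A x) (B y) (C x y)) (hs : ∀ x y, |s x y| = 1)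
    {x y : Fin 2} (hprod : s x y * s x (y + 1) * s (x + 1) y * s (x + 1) (y + 1) = -1)
    (hbell : bell s C = 2 * (w + k)) :
    IsPairMoments (w - k) (A x) (B y) (C x y - k * s x y) := by
  have hchain := abs_add_mul_le_of_bell_eq h hs hprod hbell
  obtain ⟨hadd, hsub⟩ := isPairMoments_iff.1 (h x y)
  rw [isPairMoments_iff]
  rcases eq_or_eq_neg_of_abs_eq (hs x y) with e | e <;> rw [e] at hchain ⊢
  · rw [one_mul, one_mul] at hchain
    constructor <;> linarith
  · rw [neg_one_mul, neg_one_mul, ← sub_eq_add_neg] at hchain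
    constructor <;> linarith

lemma abs_bell_sub_mul_le {w k σ : ℝ} {C : Fin 2 → Fin 2 → ℝ} (hC : ∀ x y, |C x y| ≤ w)
    (hσ : |σ| = 1) {i j : Fin 2} (hbell : bell (chshSign i j) C = σ * (2 * (w + k)))
    (i' j' : Fin 2) :
    |bell (chshSign i' j') fun x y => C x y - k * σ * chshSign i j x y| ≤ 2 * (w - k) := by
  have hadd : ∀ i' j', (i', j') ≠ (i, j) → |bell (chshSign i' j') C| ≤ 2 * (w - k) := by
    intro i' j' hne
    have hle := abs_bell_chshSign_add_le hC hne
    rw [hbell, abs_mul, hσ, one_mul] at hle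
    linarith [le_abs_self (2 * (w + k))]
  rw [bell_sub_mul, bell_chshSign_chshSign]
  split_ifs with heq
  · obtain ⟨rfl, rfl⟩ := Prod.mk.inj heq
    have hne : (i' + 1, j') ≠ (i', j') := by simp
    rw [hbell, show σ * (2 * (w + k)) - k * σ * 4 = σ * (2 * (w - k)) by ring, abs_mul, hσ,
      one_mul, abs_of_nonneg ((abs_nonneg _).trans (hadd _ _ hne))]
  · rw [mul_zero, sub_zero]
    exact hadd i' j' heq

theorem exists_isLocalTable_le_pairTable {w k : ℝ} (hk : 0 ≤ k) {A B : Fin 2 → ℝ}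
    {C : Fin 2 → Fin 2 → ℝ} (h : ∀ x y, IsPairMoments w (A x) (B y) (C x y)) {i j : Fin 2}
    (hbell : |bell (chshSign i j) C| = 2 * (w + k)) :
    ∃ Q, IsLocalTable (w - k) Q ∧ ∀ a b x y, Q a b x y ≤ pairTable w (A x) (B y) (C x y) a b := by
  obtain ⟨σ, hσ, hbell⟩ : ∃ σ : ℝ, |σ| = 1 ∧ bell (chshSign i j) C = σ * (2 * (w + k)) := by
    rcases eq_or_eq_neg_of_abs_eq hbell with e | e
    · exact ⟨1, abs_one, by rw [e, one_mul]⟩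
    · exact ⟨-1, by rw [abs_neg, abs_one], by rw [e, neg_one_mul]⟩
  have hσσ : σ * σ = 1 := by rw [← abs_mul_abs_self, hσ, one_mul]
  let s : Fin 2 → Fin 2 → ℝ := fun x y => σ * chshSign i j x y
  have hs : ∀ x y, |s x y| = 1 := fun x y => by rw [abs_mul, hσ, abs_chshSign, one_mul]
  have hprod : ∀ x y, s x y * s x (y + 1) * s (x + 1) y * s (x + 1) (y + 1) = -1 := fun x y => by
    linear_combination (σ * σ) ^ 2 * prod_chshSign i j x y - (σ * σ + 1) * hσσ
  have hbell_s : bell s C = 2 * (w + k) := by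
    have : bell s C = σ * bell (chshSign i j) C := by simp only [bell, s, mul_sum, mul_assoc]
    linear_combination this + σ * hbell + 2 * (w + k) * hσσ
  refine ⟨_, isLocalTable_pairTable_of_chsh
    (fun x y => isPairMoments_sub_mul h hs (hprod x y) hbell_s) fun i' j' => ?_,
    fun a b x y => ?_⟩
  · simpa only [s, mul_assoc] using
      abs_bell_sub_mul_le (fun x y => (h x y).abs_corr_le) hσ hbell i' j'
  · have hab : 0 ≤ 1 + outVal a * outVal b * s x y := by
      rcases eq_or_eq_neg_of_abs_eq (hs x y) with e | e <;> rw [e] <;> cases a <;> cases b <;>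
        norm_num [outVal]
    simp only [pairTable]
    linarith [mul_nonneg hk hab]

/-! ### The measure of free choice -/

lemma exists_eq_pairTable {P : Bool → Bool → Fin 2 → Fin 2 → ℝ} {w : ℝ}
    (hP : ∀ x y, ∑ a, ∑ b, P a b x y = w) (hNS : NonSignalling P) :
    ∃ A B : Fin 2 → ℝ, ∀ a b x y, P a b x y = pairTable w (A x) (B y) (corr P x y) a b := by
  refine ⟨fun x => ∑ a, outVal a * ∑ b, P a b x 0, fun y => ∑ b, outVal b * ∑ a, P a b 0 y,
    fun a b x y => ?_⟩
  simp only [hNS.1 _ x 0 y, hNS.2 _ y 0 x, pairTable, corr, ← hP x y, Fintype.sum_bool, outVal]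
  cases a <;> cases b <;> simp only [if_true, Bool.false_eq_true, if_false] <;> ring

theorem exists_isLocalTable_le {P : Bool → Bool → Fin 2 → Fin 2 → ℝ} (hP : IsBehaviour P)
    (hNS : NonSignalling P) :
    ∃ Q, IsLocalTable (min 1 ((4 - Smax P) / 2)) Q ∧ ∀ a b x y, Q a b x y ≤ P a b x y := by
  obtain ⟨A, B, hAB⟩ := exists_eq_pairTable hP.2 hNS
  have h : ∀ x y, IsPairMoments 1 (A x) (B y) (corr P x y) :=
    fun x y a b => hAB a b x y ▸ hP.1 a b x y
  simp only [hAB]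
  rcases le_or_gt (Smax P) 2 with hS | hS
  · rw [min_eq_left (by linarith)]
    exact ⟨_, isLocalTable_pairTable_of_chsh h (Smax_le_iff.1 (by linarith)), fun _ _ _ _ => le_rfl⟩
  · obtain ⟨i, j, hij⟩ := exists_abs_bell_eq_Smax P
    rw [min_eq_right (by linarith), show (4 - Smax P) / 2 = 1 - (Smax P - 2) / 2 by ring]
    exact exists_isLocalTable_le_pairTable (by linarith) h (hij.trans (by ring))

theorem isGreatest_LHVFreeWeights {P : Bool → Bool → Fin 2 → Fin 2 → ℝ} (hP : IsBehaviour P)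
    (hNS : NonSignalling P) {p : Fin 2 → Fin 2 → ℝ} (hp : IsSettingDist p) :
    IsGreatest (LHVFreeWeights 2 P p) (min 1 ((4 - Smax P) / 2)) := by
  have hub : min 1 ((4 - Smax P) / 2) ∈ upperBounds (LHVFreeWeights 2 P p) := by
    rintro _ ⟨N, hN, rfl⟩
    exact le_min N.freeWeight_le_one (by linarith [hN.Smax_le])
  obtain ⟨Q, hQ, hQP⟩ := exists_isLocalTable_le hP hNS
  obtain ⟨N, hN, hle⟩ := hQ.exists_isLHV hP hp hQP
  exact ⟨⟨N, hN, hle.antisymm (hub ⟨N, hN, rfl⟩)⟩, hub⟩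

theorem muF_eq_min {P : Bool → Bool → Fin 2 → Fin 2 → ℝ} (hP : IsBehaviour P)
    (hNS : NonSignalling P) : muF 2 P = min 1 ((4 - Smax P) / 2) := by
  have : Nonempty {f : Fin 2 → Fin 2 → ℝ // IsSettingDist f} :=
    ⟨⟨fun _ _ => 1 / 4, fun _ _ => by norm_num, by norm_num⟩⟩
  rw [muF, iInf_congr fun sp => (isGreatest_LHVFreeWeights hP hNS sp.2).csSup_eq, ciInf_const]

theorem muF_of_nonsignalling_CHSH (P : Bool → Bool → Fin 2 → Fin 2 → ℝ)
    (hP : IsBehaviour P) (hNS : NonSignalling P) :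
    (2 < Smax P → muF 2 P = (4 - Smax P) / 2) ∧
    (Smax P ≤ 2 → muF 2 P = 1) := by
  rw [muF_eq_min hP hNS]
  exact ⟨fun h => min_eq_right (by linarith), fun h => min_eq_left (by linarith)⟩
end
end
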